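/- Let s be a positive integer, q = 3^{2s}, let h₀ be a positive divisor of 3^{s} + 1, and set h = h₀². Then for all integers t, m with 1 ≤ t < m ≤ 2⌈(q + 2·3^{s} + 1 − 8h)/(6h)⌉, there exists an optimal (3h−2, 3)-LRC over F_q with parameters [3hm, (3h−2)t + 1, 3h(m−t)]_q, and there exists an optimal (2, 3h−1)-LRC over F_q with parameters [3hm, 2t + 1, 3h(m−t)]_q. -/

import Mathlib

/-- The Hamming weight of a vector: the number of nonzero coordinates. -/
def hammingWt {F : Type*} [Zero F] [DecidableEq F] {n : ℕ} (v : Fin n → F) : ℕ :=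
  (Finset.univ.filter (fun i => v i ≠ 0)).card

/-- The minimum distance of the linear code `C` is at least `d`. -/
def MinDistGe {F : Type*} [Field F] [DecidableEq F] {n : ℕ}
    (C : Submodule F (Fin n → F)) (d : ℕ) : Prop :=
  ∀ c ∈ C, c ≠ 0 → d ≤ hammingWt c

/-- The minimum distance of the linear code `C` is exactly `d`. -/
def MinDistEq {F : Type*} [Field F] [DecidableEq F] {n : ℕ}
    (C : Submodule F (Fin n → F)) (d : ℕ) : Prop :=
  MinDistGe C d ∧ ∃ c ∈ C, c ≠ 0 ∧ hammingWt c = d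

/-- `C` is an `(r, δ)`-locally repairable code: every coordinate `i` has a repair
group `R` containing `i`, of size at most `r + δ - 1`, such that the punctured code
`C|_R` has minimum distance at least `δ` (i.e. every codeword whose restriction to
`R` is nonzero has at least `δ` nonzero coordinates inside `R`). -/
def IsLRC {F : Type*} [Field F] [DecidableEq F] {n : ℕ}
    (C : Submodule F (Fin n → F)) (r δ : ℕ) : Prop :=
  ∀ i : Fin n, ∃ R : Finset (Fin n), i ∈ R ∧ R.card ≤ r + δ - 1 ∧
    ∀ c ∈ C, (∃ j ∈ R, c j ≠ 0) → δ ≤ (R.filter (fun j => c j ≠ 0)).card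

/-- The parameters `[n, k, d]` attain the Singleton-type bound for `(r, δ)`-LRCs:
`d = n - k + 1 - (⌈k/r⌉ - 1)(δ - 1)`  (here `⌈k/r⌉ = (k + r - 1)/r`). -/
def SingletonOptimal (n k d r δ : ℕ) : Prop :=
  (d : ℤ) = (n : ℤ) - (k : ℤ) + 1 - ((((k + r - 1) / r : ℕ) : ℤ) - 1) * ((δ : ℤ) - 1)

/-- There exists an optimal `(r, δ)`-LRC over `F` with parameters `[n, k, d]`. -/
def ExistsOptimalLRC (F : Type*) [Field F] [DecidableEq F] (n k d r δ : ℕ) : Prop :=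
  ∃ C : Submodule F (Fin n → F),
    Module.finrank F C = k ∧ MinDistEq C d ∧ IsLRC C r δ ∧ SingletonOptimal n k d r δ

/-! For a suitable `g ≠ 0` the supersingular curve `y² = x³ - g² x` over the field with `3 ^ (2 s)`
elements has `(3 ^ s + 1) ^ 2` points: it is an Artin–Schreier cover of the `y`-line, so its points
are counted by quadratic Gauss sums. Its automorphism `σ : (x, y) ↦ (x + g, y)` satisfies
`1 + σ + σ² = 0`, and the group of points has a `σ`-stable subgroup `H` of order `h = h₀ ^ 2`.

Summing the `y`-coordinate over translates by `H` yields a function `G / ψ` of degree `3 h` that is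
invariant under `H` and `σ`, hence constant on the unions of the three cosets `P + H`, `σ P + H`,
`σ² P + H`. Unless `2 P ∈ H`, such a union is a block of `3 h` points that sum to zero, no two of
which sum to zero. On a block where `G = b ψ`, the function `∑ₖ uₖ Gᵏ ψᵗ⁻¹⁻ᵏ + a Gᵗ`, with `uₖ` in a
space `U` containing `ψ`, agrees with `ψᵗ⁻¹` times an element of `U`. The two families of codes
evaluate these functions at the points of `m` blocks.

For the first family `U` is the space of functions with a pole of order at most `3 h - 2` at
infinity. A nonzero `u ∈ U` with `3 h - 2` zeros in a block would have zeros with sum zero, leaving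
two points of the block with sum zero; so it has at most `3 h - 3` zeros there. For the second
family `U` is spanned by `ψ` and `x ψ`, and `x` separates the points of a block. -/

namespace EllipticLRC

section StableSubgroup

variable {A : Type*} [AddCommGroup A] {σ : A →+ A} {a b : ℤ}

lemma zmultiples_le_comap {w : A} {c : ℤ} (hw : σ w = c • w) :
    AddSubgroup.zmultiples w ≤ (AddSubgroup.zmultiples w).comap σ := by
  rw [AddSubgroup.zmultiples_le, AddSubgroup.mem_comap, hw]
  exact AddSubgroup.zsmul_mem_zmultiples w c

lemma closure_pair_le_comap (hσ : ∀ x, σ (σ x) = a • σ x + b • x) (v : A) :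
    AddSubgroup.closure {v, σ v} ≤ (AddSubgroup.closure {v, σ v}).comap σ := by
  have hv : v ∈ AddSubgroup.closure {v, σ v} := AddSubgroup.subset_closure (by simp)
  have hσv : σ v ∈ AddSubgroup.closure {v, σ v} := AddSubgroup.subset_closure (by simp)
  rw [AddSubgroup.closure_le]
  rintro _ (rfl | rfl)
  · exact hσv
  · rw [AddSubgroup.coe_comap, Set.mem_preimage, hσ]
    exact add_mem (zsmul_mem hσv a) (zsmul_mem hv b)

lemma card_preimage_mk (H : AddSubgroup A) (T : Set (A ⧸ H)) :
    Nat.card ((↑) ⁻¹' T : Set A) = Nat.card H * Nat.card T := by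
  rw [← Nat.card_prod, Nat.card_congr (QuotientAddGroup.preimageMkEquivAddSubgroupProdSet H T)]

lemma quadratic_quotient_map (hσ : ∀ x, σ (σ x) = a • σ x + b • x) {H : AddSubgroup A}
    (hH : H ≤ H.comap σ) (x : A ⧸ H) :
    QuotientAddGroup.map H H σ hH (QuotientAddGroup.map H H σ hH x) =
      a • QuotientAddGroup.map H H σ hH x + b • x := by
  obtain ⟨x, rfl⟩ := QuotientAddGroup.mk_surjective x
  exact congrArg QuotientAddGroup.mk (hσ x)

variable {l : ℕ}

lemma card_closure_pair_dvd_sq {v w : A} (hv : l • v = 0) (hw : l • w = 0) :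
    Nat.card (AddSubgroup.closure {v, w}) ∣ l ^ 2 := by
  classical
  have hker : AddSubgroup.closure {v, w} ≤ (nsmulAddMonoidHom l : A →+ A).ker := by
    rw [AddSubgroup.closure_le]
    rintro _ (rfl | rfl) <;> assumption
  have htorsion (x : AddSubgroup.closure {v, w}) : l • x = 0 := Subtype.ext (hker x.2)
  have hrank : AddGroup.rank (AddSubgroup.closure {v, w}) ≤ 2 := by
    rw [AddSubgroup.rank_congr (K := .closure (({v, w} : Finset A) : Set A)) (by simp)]
    exact (AddSubgroup.rank_closure_finset_le_card _).trans Finset.card_le_two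
  exact (card_dvd_exponent_nsmul_rank' _ htorsion).trans (pow_dvd_pow l hrank)

variable [Finite A]

lemma exists_stable_card_eq_or_sq (hσ : ∀ x, σ (σ x) = a • σ x + b • x) (hl : l.Prime)
    (hdvd : l ∣ Nat.card A) :
    ∃ H : AddSubgroup A, H ≤ H.comap σ ∧ (Nat.card H = l ∨ Nat.card H = l ^ 2) := by
  have := Fact.mk hl
  obtain ⟨v, hv⟩ := exists_prime_addOrderOf_dvd_card' l hdvd
  have hlv : l • v = 0 := hv ▸ addOrderOf_nsmul_eq_zero v
  refine ⟨_, closure_pair_le_comap hσ v, ?_⟩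
  obtain ⟨i, hi, hcard⟩ := (Nat.dvd_prime_pow hl).mp
    (card_closure_pair_dvd_sq hlv (by rw [← map_nsmul, hlv, map_zero] : l • σ v = 0))
  have hdvd' : l ∣ Nat.card (AddSubgroup.closure {v, σ v}) := by
    rw [← hv, ← Nat.card_zmultiples]
    exact AddSubgroup.card_dvd_of_le
      (AddSubgroup.zmultiples_le.mpr (AddSubgroup.subset_closure (by simp)))
  interval_cases i
  · rw [hcard] at hdvd'
    exact absurd hdvd' (by simpa using hl.ne_one)
  · exact .inl (by simpa using hcard)
  · exact .inr hcard

lemma exists_dvd_quadratic_of_stable_card_eq_prime (hσ : ∀ x, σ (σ x) = a • σ x + b • x)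
    (hl : l.Prime) {H : AddSubgroup A} (hH : H ≤ H.comap σ) (hcard : Nat.card H = l) :
    ∃ c : ℤ, (l : ℤ) ∣ c ^ 2 - a * c - b := by
  have := Fact.mk hl
  obtain ⟨w, hw⟩ := exists_prime_addOrderOf_dvd_card' (G := H) l (by rw [hcard])
  have hw' : addOrderOf (w : A) = l := hw ▸ AddSubgroup.addOrderOf_coe w
  have hgen : AddSubgroup.zmultiples (w : A) = H :=
    AddSubgroup.eq_of_le_of_card_ge (AddSubgroup.zmultiples_le.mpr w.2)
      (by rw [Nat.card_zmultiples, hw', hcard])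
  have hσw : σ w ∈ AddSubgroup.zmultiples (w : A) := by
    rw [hgen]
    exact hH w.2
  obtain ⟨c, hc : c • (w : A) = σ w⟩ := hσw
  refine ⟨c, ?_⟩
  have hcc : (c * c) • (w : A) = (a * c + b) • (w : A) := by
    rw [mul_smul, hc, ← map_zsmul, hc, hσ, add_smul, mul_smul, hc]
  rw [← hw', addOrderOf_dvd_iff_zsmul_eq_zero, sub_sub, sub_smul, pow_two, hcc, sub_self]

-- If `w` has order `l` and is not an eigenvector for `c`, then `σ w - c • w` is one for `a - c`.
lemma exists_stable_card_eq_prime (hσ : ∀ x, σ (σ x) = a • σ x + b • x) (hl : l.Prime)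
    (hdvd : l ∣ Nat.card A) {c : ℤ} (hc : (l : ℤ) ∣ c ^ 2 - a * c - b) :
    ∃ H : AddSubgroup A, H ≤ H.comap σ ∧ Nat.card H = l := by
  have := Fact.mk hl
  obtain ⟨w, hw⟩ := exists_prime_addOrderOf_dvd_card' l hdvd
  by_cases hσw : σ w = c • w
  · exact ⟨_, zmultiples_le_comap hσw, by rw [Nat.card_zmultiples, hw]⟩
  have hlw : l • w = 0 := hw ▸ addOrderOf_nsmul_eq_zero w
  have hroot : (c ^ 2 - a * c - b) • w = 0 :=
    addOrderOf_dvd_iff_zsmul_eq_zero.mp (hw ▸ hc)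
  have heigen : σ (σ w - c • w) = (a - c) • (σ w - c • w) := by
    rw [map_sub, map_zsmul, hσ, ← sub_eq_zero, ← neg_eq_zero, ← hroot]
    module
  have horder : addOrderOf (σ w - c • w) = l :=
    addOrderOf_eq_prime (by rw [smul_sub, ← map_nsmul, smul_comm, hlw]; simp) (sub_ne_zero.mpr hσw)
  exact ⟨_, zmultiples_le_comap heigen, by rw [Nat.card_zmultiples, horder]⟩

lemma exists_stable_card_eq_prime_sq (hσ : ∀ x, σ (σ x) = a • σ x + b • x) (hl : l.Prime)
    (hdvd : l ^ 2 ∣ Nat.card A) :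
    ∃ H : AddSubgroup A, H ≤ H.comap σ ∧ Nat.card H = l ^ 2 := by
  obtain ⟨H, hH, hcard | hcard⟩ :=
    exists_stable_card_eq_or_sq hσ hl ((dvd_pow_self l two_ne_zero).trans hdvd)
  · obtain ⟨c, hc⟩ := exists_dvd_quadratic_of_stable_card_eq_prime hσ hl hH hcard
    rw [H.card_eq_card_quotient_mul_card_addSubgroup, hcard, pow_two] at hdvd
    obtain ⟨K, hK, hcardK⟩ := exists_stable_card_eq_prime (quadratic_quotient_map hσ hH) hl
      (Nat.dvd_of_mul_dvd_mul_right hl.pos hdvd) hc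
    exact ⟨K.comap (QuotientAddGroup.mk' H), fun x hx ↦ hK hx,
      (card_preimage_mk H K).trans (by rw [hcard, pow_two]; exact congrArg _ hcardK)⟩
  · exact ⟨H, hH, hcard⟩

theorem exists_stable_card_eq_sq (k : ℕ) {A : Type*} [AddCommGroup A] [Finite A] {σ : A →+ A}
    (hσ : ∀ x, σ (σ x) = a • σ x + b • x) (hdvd : k ^ 2 ∣ Nat.card A) :
    ∃ H : AddSubgroup A, H ≤ H.comap σ ∧ Nat.card H = k ^ 2 := by
  induction k using Nat.recOnMul generalizing A with
  | zero => simp [Nat.card_pos.ne'] at hdvd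
  | one => exact ⟨⊥, bot_le, by simp⟩
  | prime l hl => exact exists_stable_card_eq_prime_sq hσ hl hdvd
  | mul k₁ k₂ ih₁ ih₂ =>
    rw [mul_pow] at hdvd ⊢
    obtain ⟨H, hH, hcard⟩ := ih₁ hσ (dvd_of_mul_right_dvd hdvd)
    rw [H.card_eq_card_quotient_mul_card_addSubgroup, hcard, mul_comm _ (k₁ ^ 2)] at hdvd
    have hpos : 0 < k₁ ^ 2 := hcard ▸ Nat.card_pos
    obtain ⟨K, hK, hcardK⟩ := ih₂ (quadratic_quotient_map hσ hH)
      (Nat.dvd_of_mul_dvd_mul_left hpos hdvd)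
    exact ⟨K.comap (QuotientAddGroup.mk' H), fun x hx ↦ hK hx,
      (card_preimage_mk H K).trans (by rw [hcard]; exact congrArg _ hcardK)⟩

end StableSubgroup

section CharacterSums

lemma exists_addChar_sum_nsmul {B : Type*} [AddCommGroup B] [Finite B] {p : ℕ} [Fact p.Prime]
    {R : AddSubgroup B} [DecidablePred (· ∈ R)] (hR : R.index = p) :
    ∃ ψ : AddChar B ℂ, ψ ≠ 1 ∧
      ∀ b, ∑ j ∈ Finset.range p, ψ (j • b) = if b ∈ R then (p : ℂ) else 0 := by
  have : Nontrivial (B ⧸ R) :=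
    Finite.one_lt_card_iff_nontrivial.mp ((Fact.out : p.Prime).one_lt.trans_eq hR.symm)
  obtain ⟨c, hc⟩ := exists_ne (0 : B ⧸ R)
  obtain ⟨χ, hχ⟩ := AddChar.exists_apply_ne_zero.mpr hc
  have hχ_ne {b : B ⧸ R} (hb : b ≠ 0) : χ b ≠ 1 := by
    intro h
    obtain ⟨k, rfl⟩ := mem_zmultiples_of_prime_card (p := p) hR hb (g' := c)
    exact hχ (by simp [AddChar.map_zsmul_eq_zpow, h])
  have hχ_pow (b : B ⧸ R) : χ b ^ p = 1 := by
    rw [← AddChar.map_nsmul_eq_pow, ← hR, AddSubgroup.index, card_nsmul_eq_zero',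
      AddChar.map_zero_eq_one]
  refine ⟨χ.compAddMonoidHom (QuotientAddGroup.mk' R), fun h ↦ ?_, fun b ↦ ?_⟩
  · obtain ⟨x, rfl⟩ := QuotientAddGroup.mk_surjective c
    exact hχ (DFunLike.congr_fun h x)
  · simp only [AddChar.compAddMonoidHom_apply, AddChar.map_nsmul_eq_pow]
    split_ifs with hb
    · simp [(QuotientAddGroup.eq_zero_iff b).mpr hb]
    · have hb' : χ (QuotientAddGroup.mk' R b) ≠ 1 :=
        hχ_ne fun h ↦ hb ((QuotientAddGroup.eq_zero_iff b).mp h)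
      rw [geom_sum_eq hb', hχ_pow, sub_self, zero_div]

lemma natCard_fiber_addMonoidHom {A B : Type*} [AddCommGroup A] [AddCommGroup B]
    (f : A →+ B) (b : B) [Decidable (b ∈ f.range)] :
    Nat.card {x // f x = b} = if b ∈ f.range then Nat.card f.ker else 0 := by
  split_ifs with hb
  · obtain ⟨a, rfl⟩ := hb
    refine Nat.card_congr ((Equiv.subRight a).subtypeEquiv fun x ↦ ?_)
    rw [Equiv.subRight_apply, AddMonoidHom.mem_ker, map_sub, sub_eq_zero]
  · have : IsEmpty {x // f x = b} := ⟨fun x ↦ hb ⟨x, x.2⟩⟩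
    exact Nat.card_of_isEmpty

lemma ringChar_ne_two_of_charP_three (F : Type*) [Field F] [CharP F 3] : ringChar F ≠ 2 := by
  rw [ringChar.eq F 3]
  norm_num

lemma isSquare_neg_one_of_card {F : Type*} [Field F] [Fintype F] {s : ℕ}
    (hF : Fintype.card F = 3 ^ (2 * s)) : IsSquare (-1 : F) := by
  rw [FiniteField.isSquare_neg_one_iff, hF, pow_mul, Nat.pow_mod]
  norm_num

variable (F : Type*) [Field F]

/-- The additive map `x ↦ x ^ p - x` in characteristic `p`. -/
def artinSchreier (p : ℕ) [Fact p.Prime] [CharP F p] : F →+ F :=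
  (frobenius F p : F →+ F) - AddMonoidHom.id F

variable {F} in
lemma artinSchreier_apply (p : ℕ) [Fact p.Prime] [CharP F p] (x : F) :
    artinSchreier F p x = x ^ p - x := rfl

lemma card_ker_artinSchreier (p : ℕ) [Fact p.Prime] [CharP F p] :
    Nat.card (artinSchreier F p).ker = p := by
  refine (Nat.card_congr (Equiv.subtypeEquivRight fun x ↦ ?_)).trans (Subfield.card_bot F p)
  rw [Subfield.mem_bot_iff_pow_eq_self F p, AddMonoidHom.mem_ker, artinSchreier_apply, sub_eq_zero]

lemma exists_addChar_card_artinSchreier [Finite F] (p : ℕ) [Fact p.Prime] [CharP F p] :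
    ∃ ψ : AddChar F ℂ, ψ ≠ 1 ∧ ∀ c : F,
      (Nat.card {x : F // x ^ p - x = c} : ℂ) = ∑ j ∈ Finset.range p, ψ (j • c) := by
  classical
  obtain ⟨ψ, hψ, hsum⟩ := exists_addChar_sum_nsmul
    (AddSubgroup.index_range.trans (card_ker_artinSchreier F p))
  refine ⟨ψ, hψ, fun c ↦ ?_⟩
  have := natCard_fiber_addMonoidHom (artinSchreier F p) c
  simp only [artinSchreier_apply] at this
  rw [hsum, this, card_ker_artinSchreier, Nat.cast_ite, Nat.cast_zero]

variable {F} [Fintype F] [DecidableEq F]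

variable (F) in
/-- The quadratic character of a finite field with complex values. -/
noncomputable def complexQuadraticChar : MulChar F ℂ :=
  (quadraticChar F).ringHomComp (Int.castRingHom ℂ)

lemma complexQuadraticChar_apply (a : F) : complexQuadraticChar F a = quadraticChar F a := rfl

lemma complexQuadraticChar_isQuadratic : (complexQuadraticChar F).IsQuadratic :=
  (quadraticChar_isQuadratic F).comp _

lemma complexQuadraticChar_ne_one (hF : ringChar F ≠ 2) : complexQuadraticChar F ≠ 1 := by
  obtain ⟨a, ha⟩ := quadraticChar_exists_neg_one' hF
  intro h
  have := DFunLike.congr_fun h (a : F)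
  rw [complexQuadraticChar_apply, ha, MulChar.one_apply_coe] at this
  norm_num at this

lemma sum_addChar_sq (hF : ringChar F ≠ 2) {ψ : AddChar F ℂ} (hψ : ψ ≠ 1) :
    ∑ y : F, ψ (y ^ 2) = gaussSum (complexQuadraticChar F) ψ := by
  have hcard (c : F) :
      ((Finset.univ.filter fun y : F ↦ y ^ 2 = c).card : ℂ) = complexQuadraticChar F c + 1 := by
    rw [complexQuadraticChar_apply]
    exact_mod_cast (by simpa using quadraticChar_card_sqrts hF c :
      ((Finset.univ.filter fun y : F ↦ y ^ 2 = c).card : ℤ) = quadraticChar F c + 1)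
  calc ∑ y : F, ψ (y ^ 2)
      = ∑ c : F, (complexQuadraticChar F c + 1) * ψ c := by
        rw [← Finset.sum_fiberwise Finset.univ (fun y : F ↦ y ^ 2)]
        refine Finset.sum_congr rfl fun c _ ↦ ?_
        rw [← hcard, ← nsmul_eq_mul, ← Finset.sum_const]
        exact Finset.sum_congr rfl fun y hy ↦ by rw [(Finset.mem_filter.mp hy).2]
    _ = gaussSum (complexQuadraticChar F) ψ + ∑ c : F, ψ c := by
        simp only [gaussSum, add_mul, one_mul, Finset.sum_add_distrib]
    _ = gaussSum (complexQuadraticChar F) ψ := by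
        rw [AddChar.sum_eq_zero_of_ne_one hψ, add_zero]

lemma sum_addChar_mul_sq (hF : ringChar F ≠ 2) {ψ : AddChar F ℂ} (hψ : ψ ≠ 1) {a : F}
    (ha : a ≠ 0) :
    ∑ y : F, ψ (a * y ^ 2) = quadraticChar F a * gaussSum (complexQuadraticChar F) ψ := by
  have := sum_addChar_sq hF (ψ := ψ.mulShift a)
    (AddChar.IsPrimitive.of_ne_one hψ ha)
  rw [← Units.val_mk0 ha, gaussSum_mulShift_eq, complexQuadraticChar_isQuadratic.inv] at this
  simpa only [AddChar.mulShift_apply, Units.val_mk0, complexQuadraticChar_apply] using this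

variable [CharP F 3]

lemma exists_quadraticChar_mul_gaussSum_eq {s : ℕ} (hF : Fintype.card F = 3 ^ (2 * s))
    {ψ : AddChar F ℂ} (hψ : ψ ≠ 1) :
    ∃ g : F, g ≠ 0 ∧ quadraticChar F g * gaussSum (complexQuadraticChar F) ψ = 3 ^ s := by
  have hneg : quadraticChar F (-1) = 1 :=
    (quadraticChar_one_iff_isSquare (neg_ne_zero.mpr one_ne_zero)).mpr (isSquare_neg_one_of_card hF)
  have hchar := ringChar_ne_two_of_charP_three F
  have hsq : gaussSum (complexQuadraticChar F) ψ ^ 2 = (3 ^ s) ^ 2 := by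
    rw [gaussSum_sq (complexQuadraticChar_ne_one hchar) complexQuadraticChar_isQuadratic
      (AddChar.IsPrimitive.of_ne_one hψ), complexQuadraticChar_apply, hneg, hF]
    push_cast
    ring
  rcases sq_eq_sq_iff_eq_or_eq_neg.mp hsq with h | h
  · exact ⟨1, one_ne_zero, by simp [h]⟩
  · obtain ⟨g, hg⟩ := quadraticChar_exists_neg_one hchar
    refine ⟨g, ?_, by simp [hg, h]⟩
    rintro rfl
    simp at hg

/-- The substitution `x = g u` turns `y² = x³ - g² x` into the Artin–Schreier equation
`u³ - u = g⁻³ y²`. -/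
def curveEquivArtinSchreier {g : F} (hg : g ≠ 0) :
    {p : F × F // p.2 ^ 2 = p.1 ^ 3 - g ^ 2 * p.1} ≃
      Σ y : F, {u : F // u ^ 3 - u = (g ^ 3)⁻¹ * y ^ 2} where
  toFun p := ⟨p.1.2, p.1.1 / g, by rw [p.2]; field_simp⟩
  invFun p := ⟨(g * p.2.1, p.1), by
    have := p.2.2
    field_simp at this
    linear_combination -this⟩
  left_inv p := Subtype.ext (Prod.ext (mul_div_cancel₀ _ hg) rfl)
  right_inv p := by simp [hg]

omit [DecidableEq F] in
theorem exists_card_curve_eq {s : ℕ} (hF : Fintype.card F = 3 ^ (2 * s)) :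
    ∃ g : F, g ≠ 0 ∧ Nat.card {p : F × F // p.2 ^ 2 = p.1 ^ 3 - g ^ 2 * p.1} =
      3 ^ (2 * s) + 2 * 3 ^ s := by
  classical
  obtain ⟨ψ, hψ, hcount⟩ := exists_addChar_card_artinSchreier F 3
  obtain ⟨g, hg, hgauss⟩ := exists_quadraticChar_mul_gaussSum_eq hF hψ
  have hshift {ε : F} (hε : ε ^ 2 = 1) (hεsq : IsSquare ε) :
      ∑ y : F, ψ (ε * (g ^ 3)⁻¹ * y ^ 2) = 3 ^ s := by
    have hε0 : ε ≠ 0 := by rintro rfl; simp at hε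
    have hfactor : ε * (g ^ 3)⁻¹ = ε * ((g⁻¹ ^ 2) ^ 2 * g) := by field_simp
    rw [sum_addChar_mul_sq (ringChar_ne_two_of_charP_three F) hψ
      (mul_ne_zero hε0 (inv_ne_zero (pow_ne_zero 3 hg))), ← hgauss, hfactor, map_mul, map_mul,
      (quadraticChar_one_iff_isSquare hε0).mpr hεsq,
      quadraticChar_sq_one' (pow_ne_zero 2 (inv_ne_zero hg)), one_mul, one_mul]
  refine ⟨g, hg, ?_⟩
  have htwo (c : F) : 2 • c = -1 * c := by
    linear_combination (by simpa using CharP.cast_eq_zero F 3 : (3 : F) = 0) * c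
  rw [Nat.card_congr (curveEquivArtinSchreier hg), Nat.card_sigma, ← Nat.cast_inj (R := ℂ)]
  push_cast
  simp only [hcount, Finset.sum_range_succ, Finset.sum_range_zero,
    zero_add, zero_smul, one_smul, htwo, AddChar.map_zero_eq_one, Finset.sum_add_distrib]
  have h1 := hshift (one_pow 2) IsSquare.one
  have h2 := hshift neg_one_sq (isSquare_neg_one_of_card hF)
  simp only [one_mul, mul_assoc] at h1 h2
  rw [h1, h2]
  rw [Finset.sum_const, Finset.card_univ, hF, nsmul_one]
  push_cast
  ring

end CharacterSums

section RationalPoints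

open Polynomial

variable {F R ι : Type*} [Field F] [CommRing R] [Algebra F R] {φ : ι → R →ₐ[F] F} {u : R}

lemma algHom_eq_of_ker_eq {χ ψ : R →ₐ[F] F} (h : RingHom.ker χ = RingHom.ker ψ) : χ = ψ := by
  ext r
  have hr : r - algebraMap F R (χ r) ∈ RingHom.ker ψ := h ▸ by simp [RingHom.mem_ker]
  rw [RingHom.mem_ker, map_sub, AlgHom.commutes, Algebra.algebraMap_self_apply, sub_eq_zero] at hr
  exact hr.symm

lemma pairwise_isCoprime_ker (hφ : Function.Injective φ) :
    Pairwise (Function.onFun IsCoprime fun i ↦ RingHom.ker (φ i)) := by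
  intro i j hij
  have hmax (k : ι) : (RingHom.ker (φ k)).IsMaximal :=
    RingHom.ker_isMaximal_of_surjective _ fun a ↦ ⟨algebraMap F R a, by simp⟩
  have := hmax i
  have := hmax j
  exact Ideal.isCoprime_of_isMaximal fun h ↦ hij (hφ (algHom_eq_of_ker_eq h))

lemma span_singleton_le_ker_pi (hu : ∀ i, φ i u = 0) :
    ∀ r ∈ Ideal.span {u}, AlgHom.pi φ r = 0 := by
  intro r hr
  obtain ⟨w, rfl⟩ := Ideal.mem_span_singleton'.mp hr
  exact funext fun i ↦ by simp [hu]

lemma finiteDimensional_quotient_span_singleton [IsDomain R] [Algebra F[X] R]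
    [IsScalarTower F F[X] R] [Finite ι] (b : Module.Basis ι F[X] R) (hu : u ≠ 0) :
    FiniteDimensional F (R ⧸ Ideal.span {u}) := by
  have hI : Ideal.span {u} ≠ ⊥ := by simpa using hu
  exact Module.Finite.equiv (((Ideal.span {u}).quotientEquivPiSpan b hI).restrictScalars F).symm

lemma surjective_pi [Finite ι] (hφ : Function.Injective φ) : Function.Surjective (AlgHom.pi φ) := by
  intro v
  obtain ⟨r, hr⟩ := Ideal.exists_forall_sub_mem_ideal (pairwise_isCoprime_ker hφ)
    fun i ↦ algebraMap F R (v i)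
  refine ⟨r, funext fun i ↦ ?_⟩
  simpa [RingHom.mem_ker, sub_eq_zero] using hr i

variable [Fintype ι] [FiniteDimensional F (R ⧸ Ideal.span {u})]

lemma card_le_finrank_quotient (hφ : Function.Injective φ) (hu : ∀ i, φ i u = 0) :
    Fintype.card ι ≤ Module.finrank F (R ⧸ Ideal.span {u}) := by
  rw [← Module.finrank_fintype_fun_eq_card F]
  exact LinearMap.finrank_le_finrank_of_surjective
    (f := (Ideal.Quotient.liftₐ _ _ (span_singleton_le_ker_pi hu)).toLinearMap)
    (Ideal.Quotient.lift_surjective_of_surjective _ (span_singleton_le_ker_pi hu)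
      (surjective_pi hφ))

lemma span_singleton_eq_prod_ker (hφ : Function.Injective φ) (hu : ∀ i, φ i u = 0)
    (hcard : Module.finrank F (R ⧸ Ideal.span {u}) = Fintype.card ι) :
    Ideal.span {u} = ∏ i, RingHom.ker (φ i) := by
  set f := Ideal.Quotient.liftₐ _ _ (span_singleton_le_ker_pi hu)
  have hinj : Function.Injective f :=
    (LinearMap.injective_iff_surjective_of_finrank_eq_finrank (f := f.toLinearMap)
      (by rw [hcard, Module.finrank_fintype_fun_eq_card])).mpr
      (Ideal.Quotient.lift_surjective_of_surjective _ (span_singleton_le_ker_pi hu)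
        (surjective_pi hφ))
  rw [Ideal.prod_eq_iInf_of_pairwise_isCoprime fun i _ j _ hij ↦ pairwise_isCoprime_ker hφ hij]
  refine le_antisymm ?_ fun r hr ↦ ?_
  · simpa [Ideal.span_singleton_le_iff_mem, RingHom.mem_ker] using hu
  · simp only [Ideal.mem_iInf, Finset.mem_univ, true_imp_iff] at hr
    have hfr : f (Ideal.Quotient.mk _ r) = 0 := funext hr
    exact Ideal.Quotient.eq_zero_iff_mem.mp (hinj (hfr.trans (map_zero f).symm))

end RationalPoints

section PoleSpace

open Polynomial WeierstrassCurve.Affine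

variable {F : Type*} [Field F] (W : WeierstrassCurve.Affine F)

/-- The `F`-linear isomorphism `(p, q) ↦ p(x) + q(x) y` onto the coordinate ring of `W`. -/
noncomputable def coordinateRingEquiv : (F[X] × F[X]) ≃ₗ[F] W.CoordinateRing :=
  ((LinearEquiv.finTwoArrow F[X] F[X]).symm ≪≫ₗ
    (CoordinateRing.basis W).equivFun.symm).restrictScalars F

lemma coordinateRingEquiv_apply (p q : F[X]) : coordinateRingEquiv W (p, q) =
    p • (1 : W.CoordinateRing) + q • CoordinateRing.mk W X := by
  simp [coordinateRingEquiv, Module.Basis.equivFun_symm_apply]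

/-- The Riemann–Roch space `L(k O)` of functions on `W` whose only pole is the point at infinity
`O`, of order at most `k`: it is spanned by `xⁱ` for `2 i ≤ k` and `xʲ y` for `2 j + 3 ≤ k`. -/
noncomputable def poleSpace (k : ℕ) : Submodule F W.CoordinateRing :=
  LinearMap.range ((coordinateRingEquiv W).toLinearMap ∘ₗ
    (degreeLT F (k / 2 + 1)).subtype.prodMap (degreeLT F ((k - 1) / 2)).subtype)

variable {W} {k l : ℕ}

lemma coordinateRingEquiv_mem_poleSpace_iff {p q : F[X]} :
    coordinateRingEquiv W (p, q) ∈ poleSpace W k ↔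
      p.degree < ((k / 2 + 1 : ℕ) : WithBot ℕ) ∧ q.degree < (((k - 1) / 2 : ℕ) : WithBot ℕ) := by
  simp [poleSpace, ← mem_degreeLT, -Nat.cast_add]

lemma coordinateRingEquiv_mem_poleSpace_of_natDegree_le {p q : F[X]}
    (hp : 2 * p.natDegree ≤ k) (hq : 2 * q.natDegree + 3 ≤ k ∨ q = 0) :
    coordinateRingEquiv W (p, q) ∈ poleSpace W k := by
  have hlt {r : F[X]} {n : ℕ} (h : r.natDegree < n) : r.degree < (n : WithBot ℕ) :=
    degree_le_natDegree.trans_lt (by exact_mod_cast h)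
  refine coordinateRingEquiv_mem_poleSpace_iff.mpr ⟨hlt (by omega), ?_⟩
  rcases hq with hq | rfl
  · exact hlt (by omega)
  · exact degree_zero.trans_lt (WithBot.bot_lt_coe _)

-- The norm of `u` down to `F[x]` has degree equal to the pole order of `u` at infinity.
lemma mem_poleSpace_iff {u : W.CoordinateRing} :
    u ∈ poleSpace W k ↔ (Algebra.norm F[X] u).degree ≤ k := by
  obtain ⟨⟨p, q⟩, rfl⟩ := (coordinateRingEquiv W).surjective u
  rw [coordinateRingEquiv_mem_poleSpace_iff, coordinateRingEquiv_apply,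
    CoordinateRing.degree_norm_smul_basis, max_le_iff]
  refine and_congr ?_ ?_
  · by_cases hp : p = 0
    · simp [hp]
    · rw [degree_eq_natDegree hp, two_nsmul]
      norm_cast
      omega
  · by_cases hq : q = 0
    · simp [hq]
    · rw [degree_eq_natDegree hq, two_nsmul, show (3 : WithBot ℕ) = (3 : ℕ) from rfl]
      norm_cast
      omega

lemma natDegree_norm_le_of_mem_poleSpace {u : W.CoordinateRing} (hu : u ∈ poleSpace W k) :
    (Algebra.norm F[X] u).natDegree ≤ k :=
  natDegree_le_of_degree_le (mem_poleSpace_iff.mp hu)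

lemma poleSpace_mono (h : k ≤ l) : poleSpace W k ≤ poleSpace W l := fun _ hu ↦
  mem_poleSpace_iff.mpr ((mem_poleSpace_iff.mp hu).trans (by exact_mod_cast h))

lemma one_mem_poleSpace : (1 : W.CoordinateRing) ∈ poleSpace W k := by
  simp [mem_poleSpace_iff]

lemma mul_mem_poleSpace {u v : W.CoordinateRing} (hu : u ∈ poleSpace W k)
    (hv : v ∈ poleSpace W l) : u * v ∈ poleSpace W (k + l) := by
  rw [mem_poleSpace_iff] at *
  rw [map_mul, degree_mul]
  exact_mod_cast add_le_add hu hv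

lemma pow_mem_poleSpace {u : W.CoordinateRing} (hu : u ∈ poleSpace W k) (n : ℕ) :
    u ^ n ∈ poleSpace W (k * n) := by
  induction n with
  | zero => simpa using one_mem_poleSpace
  | succ n ih => exact pow_succ u n ▸ mul_mem_poleSpace ih hu

instance : FiniteDimensional F (poleSpace W k) :=
  have (n : ℕ) : FiniteDimensional F (degreeLT F n) := .equiv (degreeLTEquiv F n).symm
  LinearMap.finiteDimensional_range _

lemma finrank_poleSpace (hk : 1 ≤ k) : Module.finrank F (poleSpace W k) = k := by
  have hinj : Function.Injective ((coordinateRingEquiv W).toLinearMap ∘ₗ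
      (degreeLT F (k / 2 + 1)).subtype.prodMap (degreeLT F ((k - 1) / 2)).subtype) :=
    (coordinateRingEquiv W).injective.comp
      (Subtype.val_injective.prodMap Subtype.val_injective)
  have (n : ℕ) : FiniteDimensional F (degreeLT F n) := .equiv (degreeLTEquiv F n).symm
  rw [poleSpace, LinearMap.finrank_range_of_inj hinj, Module.finrank_prod,
    (degreeLTEquiv F _).finrank_eq, (degreeLTEquiv F _).finrank_eq, Module.finrank_fin_fun,
    Module.finrank_fin_fun]
  omega

end PoleSpace

section PointIdeal

open Polynomial WeierstrassCurve.Affine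

variable {F : Type*} [Field F] {W : WeierstrassCurve.Affine F}

/-- Evaluation of functions at the affine point `(x, y)` of `W`. -/
noncomputable def evalAt {x y : F} (h : W.Equation x y) : W.CoordinateRing →ₐ[F] F :=
  AdjoinRoot.liftAlgHom W.polynomial (aeval x) y <| by
    rwa [coe_aeval_eq_evalRingHom, eval₂_evalRingHom]

lemma evalAt_mk {x y : F} (h : W.Equation x y) (p : F[X][X]) :
    evalAt h (CoordinateRing.mk W p) = p.evalEval x y := by
  rw [← eval₂_evalRingHom, ← coe_aeval_eq_evalRingHom]
  exact AdjoinRoot.liftAlgHom_mk ..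

lemma evalAt_coordinateRingEquiv {x y : F} (h : W.Equation x y) (p q : F[X]) :
    evalAt h (coordinateRingEquiv W (p, q)) = p.eval x + q.eval x * y := by
  simp only [coordinateRingEquiv_apply, CoordinateRing.smul, mul_one, map_add, map_mul, evalAt_mk,
    evalEval_C, evalEval_X]

lemma ker_evalAt {x y : F} (h : W.Equation x y) :
    RingHom.ker (evalAt h) = CoordinateRing.XYIdeal W x (C y) := by
  have hmax : (CoordinateRing.XYIdeal W x (C y)).IsMaximal := Ideal.Quotient.maximal_of_isField _
    ((CoordinateRing.quotientXYIdealEquiv h).toMulEquiv.isField (Field.toIsField F))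
  refine (hmax.eq_of_le (RingHom.ker_ne_top _) ?_).symm
  simp only [CoordinateRing.XYIdeal, Ideal.span_le, Set.pair_subset_iff, SetLike.mem_coe,
    RingHom.mem_ker, CoordinateRing.XClass, CoordinateRing.YClass, evalAt_mk]
  simp [evalEval]

/-- The ideal of functions vanishing at a point of `W`. The point at infinity, which does not
belong to the affine curve, is sent to the unit ideal. -/
noncomputable def pointIdeal : W.Point → Ideal W.CoordinateRing
  | .zero => ⊤
  | .some _ _ h => RingHom.ker (evalAt h.1)

lemma exists_algHom_ker_eq_pointIdeal {P : W.Point} (hP : P ≠ 0) :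
    ∃ φ : W.CoordinateRing →ₐ[F] F, RingHom.ker φ = pointIdeal P := by
  rcases P with _ | ⟨x, y, h⟩
  · exact absurd rfl hP
  · exact ⟨evalAt h.1, rfl⟩

lemma injective_pointIdeal : Function.Injective (pointIdeal : W.Point → _) := by
  have hne {x y : F} (h : W.Equation x y) : RingHom.ker (evalAt h) ≠ ⊤ := RingHom.ker_ne_top _
  rintro (_ | ⟨x, y, h⟩) (_ | ⟨x', y', h'⟩) hPQ
  · rfl
  · exact absurd hPQ.symm (hne h'.1)
  · exact absurd hPQ (hne h.1)
  · have heval := DFunLike.congr_fun (algHom_eq_of_ker_eq hPQ)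
    have hx := heval (CoordinateRing.mk W (C X))
    have hy := heval (CoordinateRing.mk W X)
    simp only [evalAt_mk, evalEval_C, eval_X, evalEval_X] at hx hy
    simpa using And.intro hx hy

lemma exists_units_eq_pointIdeal [DecidableEq F] (P : W.Point) :
    ∃ I : (FractionalIdeal (nonZeroDivisors W.CoordinateRing) W.FunctionField)ˣ,
      (I : FractionalIdeal (nonZeroDivisors W.CoordinateRing) W.FunctionField) = pointIdeal P ∧
        Point.toClass P = Additive.ofMul (ClassGroup.mk W.FunctionField I) := by
  rcases P with _ | ⟨x, y, h⟩
  · exact ⟨1, by simp [pointIdeal], by rw [map_one]; rfl⟩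
  · exact ⟨CoordinateRing.XYIdeal' (W := W) h, by rw [pointIdeal, ker_evalAt]; rfl, rfl⟩

lemma sum_eq_zero_of_prod_pointIdeal_eq_span [DecidableEq F] {Z : Finset W.Point}
    {u : W.CoordinateRing} (hu : u ≠ 0) (hZ : ∏ P ∈ Z, pointIdeal P = Ideal.span {u}) :
    ∑ P ∈ Z, P = 0 := by
  choose I hI hclass using exists_units_eq_pointIdeal (W := W)
  have hprod : (∏ P ∈ Z, I P).val = ((Ideal.span {u} : Ideal W.CoordinateRing) :
      FractionalIdeal (nonZeroDivisors W.CoordinateRing) W.FunctionField) := by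
    simp_rw [Units.coe_prod, hI, ← hZ]
    exact (map_prod (FractionalIdeal.coeIdealHom _ _) _ _).symm
  apply Point.toClass_injective
  rw [map_sum, map_zero, Finset.sum_congr rfl fun P _ ↦ hclass P, ← ofMul_prod, ← map_prod,
    (ClassGroup.mk_eq_one_of_coe_ideal hprod).mpr ⟨u, hu, rfl⟩, ofMul_one]

variable {k : ℕ} {u : W.CoordinateRing} {Z : Finset W.Point}

lemma exists_injective_algHom_of_zero_notMem (hZ : 0 ∉ Z) :
    ∃ φ : Z → W.CoordinateRing →ₐ[F] F, Function.Injective φ ∧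
      ∀ P, RingHom.ker (φ P) = pointIdeal P.1 := by
  choose φ hφ using fun P : Z ↦
    exists_algHom_ker_eq_pointIdeal (P := P.1) fun h ↦ hZ (h ▸ P.2)
  refine ⟨φ, fun P Q hPQ ↦ Subtype.ext (injective_pointIdeal ?_), hφ⟩
  rw [← hφ, ← hφ, hPQ]

theorem card_zeros_le (hu : u ∈ poleSpace W k) (hu0 : u ≠ 0) (hZ : 0 ∉ Z)
    (hZu : ∀ P ∈ Z, u ∈ pointIdeal P) : Z.card ≤ k := by
  have := finiteDimensional_quotient_span_singleton (CoordinateRing.basis W) hu0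
  obtain ⟨φ, hφ, hker⟩ := exists_injective_algHom_of_zero_notMem hZ
  calc Z.card = Fintype.card Z := (Fintype.card_coe Z).symm
    _ ≤ Module.finrank F (W.CoordinateRing ⧸ Ideal.span {u}) :=
      card_le_finrank_quotient hφ fun P ↦ RingHom.mem_ker.mp (hker P ▸ hZu P P.2)
    _ = (Algebra.norm F[X] u).natDegree :=
      finrank_quotient_span_eq_natDegree_norm (CoordinateRing.basis W) hu0
    _ ≤ k := natDegree_norm_le_of_mem_poleSpace hu

theorem sum_zeros_eq_zero [DecidableEq F] (hu : u ∈ poleSpace W Z.card) (hu0 : u ≠ 0) (hZ : 0 ∉ Z)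
    (hZu : ∀ P ∈ Z, u ∈ pointIdeal P) : ∑ P ∈ Z, P = 0 := by
  have := finiteDimensional_quotient_span_singleton (CoordinateRing.basis W) hu0
  obtain ⟨φ, hφ, hker⟩ := exists_injective_algHom_of_zero_notMem hZ
  have hφu (P : Z) : φ P u = 0 := RingHom.mem_ker.mp (hker P ▸ hZu P P.2)
  have hcard : Module.finrank F (W.CoordinateRing ⧸ Ideal.span {u}) = Fintype.card Z := by
    refine le_antisymm ?_ (card_le_finrank_quotient hφ hφu)
    rw [finrank_quotient_span_eq_natDegree_norm (CoordinateRing.basis W) hu0, Fintype.card_coe]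
    exact natDegree_norm_le_of_mem_poleSpace hu
  refine sum_eq_zero_of_prod_pointIdeal_eq_span hu0 ?_
  rw [← Finset.prod_coe_sort, ← Finset.prod_congr rfl fun P _ ↦ hker P,
    span_singleton_eq_prod_ker hφ hφu hcard]

end PointIdeal

section Curve

open WeierstrassCurve WeierstrassCurve.Affine

variable {F : Type*} [Field F]

/-- The supersingular elliptic curve `y² = x³ - g² x` in characteristic three. -/
def curve (g : F) : WeierstrassCurve.Affine F :=
  { a₁ := 0, a₂ := 0, a₃ := 0, a₄ := -g ^ 2, a₆ := 0 }

variable {g : F}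

/-- The `x`-coordinate of a point, with the junk value `0` at infinity. As `(0, 0)` lies on the
curve, evaluation at infinity is still a ring homomorphism. -/
def xCoord : (curve g).Point → F
  | .zero => 0
  | .some x _ _ => x

/-- The `y`-coordinate of a point, with the junk value `0` at infinity. -/
def yCoord : (curve g).Point → F
  | .zero => 0
  | .some _ y _ => y

lemma curve_equation_iff {x y : F} : (curve g).Equation x y ↔ y ^ 2 = x ^ 3 - g ^ 2 * x := by
  simp [equation_iff, curve, sub_eq_add_neg]

lemma curve_negY (x y : F) : (curve g).negY x y = -y := by
  simp [negY, curve]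

lemma equation_coord (P : (curve g).Point) : (curve g).Equation (xCoord P) (yCoord P) := by
  rcases P with _ | ⟨x, y, h⟩
  · exact curve_equation_iff.mpr (by simp [xCoord, yCoord])
  · exact h.1

lemma yCoord_sq (P : (curve g).Point) : yCoord P ^ 2 = xCoord P ^ 3 - g ^ 2 * xCoord P :=
  curve_equation_iff.mp (equation_coord P)

lemma yCoord_zero : yCoord (0 : (curve g).Point) = 0 := rfl

lemma xCoord_neg (P : (curve g).Point) : xCoord (-P) = xCoord P := by
  cases P <;> rfl

lemma yCoord_neg (P : (curve g).Point) : yCoord (-P) = -yCoord P := by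
  rcases P with _ | ⟨x, y, _⟩
  · exact neg_zero.symm
  · exact curve_negY x y

lemma eq_or_eq_neg_of_xCoord_eq {P Q : (curve g).Point} (hP : P ≠ 0) (hQ : Q ≠ 0)
    (h : xCoord P = xCoord Q) : P = Q ∨ P = -Q := by
  rcases P with _ | ⟨x, y, hxy⟩
  · exact absurd rfl hP
  rcases Q with _ | ⟨x', y', hxy'⟩
  · exact absurd rfl hQ
  exact Point.X_eq_iff.mp h

section Add

variable [DecidableEq F] {P Q : (curve g).Point}

lemma xCoord_ne_of_notMem {H : AddSubgroup (curve g).Point} {τ : (curve g).Point}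
    (hP : P ∉ H) (hτ : τ ∈ H) (hτ0 : τ ≠ 0) : xCoord P ≠ xCoord τ := fun h ↦ by
  rcases eq_or_eq_neg_of_xCoord_eq (ne_of_mem_of_not_mem H.zero_mem hP).symm hτ0 h with rfl | rfl
  exacts [hP hτ, hP (H.neg_mem hτ)]

lemma xCoord_add (hP : P ≠ 0) (hQ : Q ≠ 0) (h : xCoord P ≠ xCoord Q) : xCoord (P + Q) =
    ((yCoord P - yCoord Q) / (xCoord P - xCoord Q)) ^ 2 - xCoord P - xCoord Q := by
  rcases P with _ | ⟨x, y, hxy⟩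
  · exact absurd rfl hP
  rcases Q with _ | ⟨x', y', hxy'⟩
  · exact absurd rfl hQ
  change x ≠ x' at h
  rw [Point.add_of_X_ne h]
  simp [xCoord, yCoord, slope_of_X_ne h, addX, curve]

lemma yCoord_add (hP : P ≠ 0) (hQ : Q ≠ 0) (h : xCoord P ≠ xCoord Q) : yCoord (P + Q) =
    -((yCoord P - yCoord Q) / (xCoord P - xCoord Q) * (xCoord (P + Q) - xCoord P) + yCoord P) := by
  rcases P with _ | ⟨x, y, hxy⟩
  · exact absurd rfl hP
  rcases Q with _ | ⟨x', y', hxy'⟩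
  · exact absurd rfl hQ
  change x ≠ x' at h
  rw [Point.add_of_X_ne h]
  simp only [xCoord, yCoord, slope_of_X_ne h, addY, negAddY, curve_negY]

end Add

variable [CharP F 3]

lemma three_eq_zero : (3 : F) = 0 := CharP.ofNat_eq_zero F 3

lemma two_ne_zero_of_charP_three : (2 : F) ≠ 0 := fun h ↦
  one_ne_zero (α := F) (by linear_combination three_eq_zero (F := F) - h)

lemma isElliptic_curve (hg : g ≠ 0) : (curve g).IsElliptic := by
  have hΔ : (curve g).Δ = g ^ 6 := by
    simp only [Δ, b₂, b₄, b₆, b₈, curve]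
    linear_combination 21 * g ^ 6 * three_eq_zero (F := F)
  exact ⟨hΔ ▸ (isUnit_iff_ne_zero.mpr hg).pow 6⟩

lemma finite_point [Finite F] (hg : g ≠ 0) : Finite (curve g).Point :=
  have := isElliptic_curve hg
  .of_equiv (Option {p : F × F // (curve g).Equation p.1 p.2}) (curve g).pointEquiv.symm

lemma card_point [Finite F] (hg : g ≠ 0) : Nat.card (curve g).Point =
    Nat.card {p : F × F // p.2 ^ 2 = p.1 ^ 3 - g ^ 2 * p.1} + 1 := by
  have := isElliptic_curve hg
  simp only [← curve_equation_iff (g := g)]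
  exact (Nat.card_congr (curve g).pointEquiv).trans Finite.card_option

lemma neg_eq_self_iff_yCoord {P : (curve g).Point} (hP : P ≠ 0) : -P = P ↔ yCoord P = 0 := by
  rcases P with _ | ⟨x, y, h⟩
  · exact absurd rfl hP
  simp only [Point.neg_some, curve_negY, Point.some.injEq, true_and, yCoord]
  constructor
  · intro hy
    refine (mul_eq_zero.mp ?_).resolve_left two_ne_zero_of_charP_three
    linear_combination -hy
  · rintro rfl
    exact neg_zero

variable [DecidableEq F]

lemma yCoord_add_add_yCoord_sub {P Q : (curve g).Point} (hP : P ≠ 0) (hQ : Q ≠ 0)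
    (h : xCoord P ≠ xCoord Q) :
    (yCoord (P + Q) + yCoord (P - Q)) * (xCoord P - xCoord Q) ^ 3 =
      yCoord P * (yCoord Q ^ 2 - g ^ 2 * (xCoord P - xCoord Q)) := by
  have hQ' : -Q ≠ 0 := neg_ne_zero.mpr hQ
  have h' : xCoord P ≠ xCoord (-Q) := by rwa [xCoord_neg]
  rw [sub_eq_add_neg, yCoord_add hP hQ h, yCoord_add hP hQ' h', xCoord_add hP hQ h,
    xCoord_add hP hQ' h', xCoord_neg, yCoord_neg]
  have hx := sub_ne_zero.mpr h
  have hPeq := yCoord_sq P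
  have hQeq := yCoord_sq Q
  generalize yCoord P = y at *
  generalize yCoord Q = b at *
  generalize xCoord P = x at *
  generalize xCoord Q = a at *
  field_simp
  linear_combination (-2 * y) * hPeq - 7 * y * hQeq +
    (-2 * y * x * a ^ 2 + y * x * g ^ 2 + 2 * y * a * g ^ 2 - y * a ^ 3) * three_eq_zero (F := F)

end Curve

section Shift

open WeierstrassCurve WeierstrassCurve.Affine

variable {F : Type*} [Field F] [CharP F 3] {g : F}

lemma nonsingular_shift {x y : F} (h : (curve g).Nonsingular x y) :
    (curve g).Nonsingular (x + g) y := by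
  have h3 := three_eq_zero (F := F)
  rw [nonsingular_iff, curve_equation_iff] at h ⊢
  refine ⟨?_, by simpa [curve, h3] using h.2⟩
  linear_combination h.1 - (x ^ 2 * g + x * g ^ 2) * h3

lemma slope_shift [DecidableEq F] (x₁ x₂ y₁ y₂ : F) :
    (curve g).slope (x₁ + g) (x₂ + g) y₁ y₂ = (curve g).slope x₁ x₂ y₁ y₂ := by
  simp [WeierstrassCurve.Affine.slope, curve, three_eq_zero]

/-- The map `(x, y) ↦ (x + g, y)` on points, which is an automorphism because `(x + g)³ - g²(x + g)`
equals `x³ - g² x` in characteristic three. -/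
def shiftFun : (curve g).Point → (curve g).Point
  | .zero => .zero
  | .some x y h => .some (x + g) y (nonsingular_shift h)

variable [DecidableEq F]

lemma shiftFun_add (P Q : (curve g).Point) : shiftFun (P + Q) = shiftFun P + shiftFun Q := by
  rcases P, Q with ⟨_ | ⟨x₁, y₁, h₁⟩, _ | ⟨x₂, y₂, h₂⟩⟩
  any_goals rfl
  by_cases hxy : x₁ = x₂ ∧ y₁ = (curve g).negY x₂ y₂
  · have hy : y₁ = (curve g).negY (x₂ + g) y₂ := by rw [hxy.2, curve_negY, curve_negY]
    rw [Point.add_of_Y_eq hxy.1 hxy.2]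
    exact (Point.add_of_Y_eq (congrArg (· + g) hxy.1) hy).symm
  · have hxy' : ¬(x₁ + g = x₂ + g ∧ y₁ = (curve g).negY (x₂ + g) y₂) := by
      simpa only [add_left_inj, curve_negY] using hxy
    rw [Point.add_some hxy]
    simp only [shiftFun]
    rw [Point.add_some hxy', Point.some.injEq]
    have hX : (curve g).addX (x₁ + g) (x₂ + g) ((curve g).slope x₁ x₂ y₁ y₂) =
        (curve g).addX x₁ x₂ ((curve g).slope x₁ x₂ y₁ y₂) + g := by
      simp only [addX]
      linear_combination -g * three_eq_zero (F := F)
    simp only [slope_shift, addY, negAddY, curve_negY, hX, add_sub_add_right_eq_sub, and_self]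

/-- The automorphism `(x, y) ↦ (x + g, y)` of the group of points. -/
def shift : (curve g).Point →+ (curve g).Point where
  toFun := shiftFun
  map_zero' := rfl
  map_add' := shiftFun_add

lemma shift_ne_zero {P : (curve g).Point} (hP : P ≠ 0) : shift P ≠ 0 := by
  rcases P with _ | ⟨x, y, h⟩
  · exact absurd rfl hP
  · exact Point.some_ne_zero _

lemma injective_shift : Function.Injective (shift (g := g)) :=
  (injective_iff_map_eq_zero _).mpr fun _ h ↦ not_imp_not.mp shift_ne_zero h

lemma xCoord_shift {P : (curve g).Point} (hP : P ≠ 0) : xCoord (shift P) = xCoord P + g := by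
  rcases P with _ | ⟨x, y, h⟩
  · exact absurd rfl hP
  · rfl

lemma yCoord_shift (P : (curve g).Point) : yCoord (shift P) = yCoord P := by
  cases P <;> rfl

lemma eq_zero_of_shift_eq_self (hg : g ≠ 0) {P : (curve g).Point} (h : shift P = P) : P = 0 := by
  by_contra hP
  exact hg (by simpa [h] using xCoord_shift hP)

lemma add_shift_add_shift_shift (hg : g ≠ 0) (P : (curve g).Point) :
    P + shift P + shift (shift P) = 0 := by
  rcases P with _ | ⟨x, y, h⟩
  · rfl
  have hx : x ≠ x + g := by simpa using hg
  have hadd : Point.some x y h + shift (.some x y h) = -shift (shift (.some x y h)) := by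
    have hslope := slope_of_X_ne (W := curve g) (y₁ := y) (y₂ := y) hx
    rw [sub_self, zero_div] at hslope
    have h3 := three_eq_zero (F := F)
    change Point.some x y h + Point.some (x + g) y _ = -Point.some (x + g + g) y _
    rw [Point.add_of_X_ne hx, Point.neg_some, Point.some.injEq]
    simp only [hslope, addX, addY, negAddY, curve_negY]
    simp only [curve]
    constructor
    · linear_combination (-x - g) * h3
    · ring
  rw [hadd, neg_add_cancel]

lemma eq_or_eq_shift_of_yCoord_eq_zero {P T : (curve g).Point} (hP : P ≠ 0) (hT : T ≠ 0)
    (hyP : yCoord P = 0) (hyT : yCoord T = 0) :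
    P = T ∨ P = shift T ∨ P = shift (shift T) := by
  have hinj {Q : (curve g).Point} (hQ : Q ≠ 0) (hx : xCoord P = xCoord Q) : P = Q :=
    (eq_or_eq_neg_of_xCoord_eq hP hQ hx).elim id fun h ↦ by
      rw [← (neg_eq_self_iff_yCoord hP).mpr hyP, h, neg_neg]
  have hcubic : (xCoord P - xCoord T) * ((xCoord P - xCoord T - g) * (xCoord P - xCoord T - g - g))
      = 0 := by
    have hPeq := yCoord_sq P
    have hTeq := yCoord_sq T
    rw [hyP] at hPeq
    rw [hyT] at hTeq
    linear_combination hTeq - hPeq + (2 * xCoord P * xCoord T * g + xCoord P * xCoord T ^ 2 +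
      xCoord P * g ^ 2 - xCoord P ^ 2 * xCoord T - xCoord P ^ 2 * g - xCoord T * g ^ 2 -
      xCoord T ^ 2 * g) * three_eq_zero (F := F)
  have hσT := shift_ne_zero hT
  rcases mul_eq_zero.mp hcubic with h | h
  · exact .inl (hinj hT (sub_eq_zero.mp h))
  rcases mul_eq_zero.mp h with h | h
  · refine .inr (.inl (hinj hσT ?_))
    rw [xCoord_shift hT]
    linear_combination h
  · refine .inr (.inr (hinj (shift_ne_zero hσT) ?_))
    rw [xCoord_shift hσT, xCoord_shift hT]
    linear_combination h

end Shift

section Evaluation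

open Polynomial WeierstrassCurve WeierstrassCurve.Affine

variable {F : Type*} [Field F] {g : F}

/-- Evaluation of functions at a point of the curve; at infinity it is evaluation at `(0, 0)`. -/
noncomputable def ev (P : (curve g).Point) : (curve g).CoordinateRing →ₐ[F] F :=
  evalAt (equation_coord P)

lemma ev_coordinateRingEquiv (P : (curve g).Point) (p q : F[X]) :
    ev P (coordinateRingEquiv (curve g) (p, q)) =
      p.eval (xCoord P) + q.eval (xCoord P) * yCoord P :=
  evalAt_coordinateRingEquiv _ p q

lemma mem_pointIdeal_iff {P : (curve g).Point} (hP : P ≠ 0) {u : (curve g).CoordinateRing} :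
    u ∈ pointIdeal P ↔ ev P u = 0 := by
  rcases P with _ | ⟨x, y, h⟩
  · exact absurd rfl hP
  · exact RingHom.mem_ker

end Evaluation

section Trace

open Polynomial WeierstrassCurve WeierstrassCurve.Affine

variable {F : Type*} [Field F] [DecidableEq F] {g : F} (H : AddSubgroup (curve g).Point)
  [Fintype H]

/-- The sum of the `y`-coordinates over the translates of `P` by `H`. Off `H` it is a function on
the quotient curve. -/
noncomputable def subgroupTrace (P : (curve g).Point) : F := ∑ τ : H, yCoord (P + τ.1)

variable {H}

lemma subgroupTrace_add_of_mem (P : (curve g).Point) {τ : (curve g).Point} (hτ : τ ∈ H) :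
    subgroupTrace H (P + τ) = subgroupTrace H P := by
  refine Fintype.sum_equiv (Equiv.addLeft (⟨τ, hτ⟩ : H)) _ _ fun ρ ↦ ?_
  rw [Equiv.coe_addLeft, AddSubgroup.coe_add, add_assoc]

lemma subgroupTrace_shift [CharP F 3] (hH : H ≤ H.comap shift) (P : (curve g).Point) :
    subgroupTrace H (shift P) = subgroupTrace H P := by
  let f : H → H := fun τ ↦ ⟨shift τ, hH τ.2⟩
  have hf : Function.Bijective f := Finite.injective_iff_bijective.mp fun _ _ h ↦
    Subtype.ext (injective_shift (congrArg Subtype.val h))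
  refine (hf.sum_comp fun τ ↦ yCoord (shift P + τ.1)).symm.trans (Finset.sum_congr rfl fun τ _ ↦ ?_)
  rw [← yCoord_shift (P + τ.1), map_add]

lemma subgroupTrace_eq_yCoord_sub_sum [CharP F 3] (P : (curve g).Point) : subgroupTrace H P =
    yCoord P - ∑ τ ∈ Finset.univ.erase (0 : H), (yCoord (P + τ.1) + yCoord (P - τ.1)) := by
  have hsum (f : H → F) : ∑ τ ∈ Finset.univ.erase (0 : H), f τ = ∑ τ, f τ - f 0 := by
    rw [← Finset.add_sum_erase _ f (Finset.mem_univ 0), add_sub_cancel_left]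
  have hneg : ∑ τ : H, yCoord (P - τ.1) = subgroupTrace H P :=
    Fintype.sum_equiv (Equiv.neg H) _ _ fun τ ↦ by simp [sub_eq_add_neg]
  rw [hsum, Finset.sum_add_distrib, hneg]
  simp only [AddSubgroup.coe_zero, add_zero, sub_zero]
  change subgroupTrace H P = yCoord P - (subgroupTrace H P + subgroupTrace H P - _)
  linear_combination (subgroupTrace H P - yCoord P) * three_eq_zero (F := F)

lemma degree_lt_of_mul_eq_X_sub_C_pow_mul {K : Type*} [Field K] {L M c : K[X]} {a : K}
    (hM : M ≠ 0) (hL : L.natDegree ≤ 1) (h : L * M = (X - C a) ^ 3 * c) : c.degree < M.degree := by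
  by_cases hc : c = 0
  · simpa [hc, bot_lt_iff_ne_bot] using hM
  rw [degree_eq_natDegree hc, degree_eq_natDegree hM]
  have hdeg := congrArg natDegree h
  rw [natDegree_mul (pow_ne_zero 3 (X_sub_C_ne_zero a)) hc, natDegree_pow, natDegree_X_sub_C]
    at hdeg
  have := natDegree_mul_le (p := L) (q := M)
  exact_mod_cast (by omega : c.natDegree < M.natDegree)

-- The condition on `M` says that it clears the poles of each `y(P + τ.1) + y(P - τ.1)`.
theorem exists_subgroupTrace_mul_eval_eq [CharP F 3] {M : F[X]} (hM : M.Monic)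
    (hdvd : ∀ τ ∈ H, τ ≠ 0 → (X - C (xCoord τ)) ^ 3 ∣
      (C (yCoord τ ^ 2) - C (g ^ 2) * (X - C (xCoord τ))) * M) :
    ∃ B : F[X], B ≠ 0 ∧ B.natDegree = M.natDegree ∧
      ∀ P ∉ H, subgroupTrace H P * M.eval (xCoord P) = yCoord P * B.eval (xCoord P) := by
  choose! c hc using hdvd
  have hsum : (∑ τ ∈ Finset.univ.erase (0 : H), c τ).degree < M.degree := by
    rw [degree_eq_natDegree hM.ne_zero, ← mem_degreeLT]
    refine Submodule.sum_mem _ fun τ hτ ↦ ?_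
    rw [mem_degreeLT, ← degree_eq_natDegree hM.ne_zero]
    have hτ0 : (τ : (curve g).Point) ≠ 0 := by simpa using hτ
    exact degree_lt_of_mul_eq_X_sub_C_pow_mul hM.ne_zero (by compute_degree) (hc τ τ.2 hτ0)
  have hdeg := degree_sub_eq_left_of_degree_lt hsum
  refine ⟨M - ∑ τ ∈ Finset.univ.erase (0 : H), c τ, fun h ↦ ?_, natDegree_eq_of_degree_eq hdeg,
    fun P hP ↦ ?_⟩
  · rw [h, degree_zero, eq_comm, degree_eq_bot] at hdeg
    exact hM.ne_zero hdeg
  have hP0 : P ≠ 0 := (ne_of_mem_of_not_mem H.zero_mem hP).symm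
  rw [subgroupTrace_eq_yCoord_sub_sum, sub_mul, eval_sub, mul_sub, eval_finsetSum, Finset.sum_mul,
    Finset.mul_sum]
  refine congrArg _ (Finset.sum_congr rfl fun τ hτ ↦ ?_)
  have hτ0 : (τ : (curve g).Point) ≠ 0 := by simpa using hτ
  have hx := xCoord_ne_of_notMem hP τ.2 hτ0
  have hceval := congrArg (eval (xCoord P)) (hc τ τ.2 hτ0)
  simp only [eval_mul, eval_sub, eval_C, eval_X, eval_pow] at hceval
  refine mul_right_cancel₀ (pow_ne_zero 3 (sub_ne_zero.mpr hx)) ?_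
  linear_combination M.eval (xCoord P) * yCoord_add_add_yCoord_sub hP0 hτ0 hx +
    yCoord P * hceval

end Trace

section Denominator

open Polynomial WeierstrassCurve WeierstrassCurve.Affine

variable {F : Type*} [Field F] [DecidableEq F] {g : F} (H : AddSubgroup (curve g).Point)
  [Fintype H]

/-- The product of `(x - x_τ)³` over the distinct `x`-coordinates `x_τ` of the points of `H` that
are not killed by two. It clears the poles of `subgroupTrace H` at these points. -/
noncomputable def denominator : F[X] :=
  ∏ ξ ∈ ({τ : H | yCoord τ.1 ≠ 0} : Finset H).image (fun τ ↦ xCoord τ.1), (X - C ξ) ^ 3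

lemma monic_denominator : (denominator H).Monic :=
  monic_prod_of_monic _ _ fun ξ _ ↦ (monic_X_sub_C ξ).pow 3

variable {H}

lemma X_sub_C_pow_dvd_denominator {τ : (curve g).Point} (hτ : τ ∈ H) (hy : yCoord τ ≠ 0) :
    (X - C (xCoord τ)) ^ 3 ∣ denominator H :=
  Finset.dvd_prod_of_mem (fun ξ ↦ (X - C ξ) ^ 3) (Finset.mem_image.mpr ⟨⟨τ, hτ⟩, by simpa, rfl⟩)

lemma eval_denominator_ne_zero {P : (curve g).Point} (hP : P ∉ H) :
    (denominator H).eval (xCoord P) ≠ 0 := by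
  simp only [denominator, eval_prod, Finset.prod_ne_zero_iff, Finset.forall_mem_image, eval_pow,
    eval_sub, eval_X, eval_C]
  refine fun τ hτ ↦ pow_ne_zero 3 (sub_ne_zero.mpr (xCoord_ne_of_notMem hP τ.2 fun h ↦ ?_))
  exact (Finset.mem_filter.mp hτ).2 (h ▸ yCoord_zero)

lemma two_mul_natDegree_denominator_le [CharP F 3] :
    2 * (denominator H).natDegree ≤ 3 * ({τ : H | yCoord τ.1 ≠ 0} : Finset H).card := by
  have hdeg : (denominator H).natDegree =
      3 * (({τ : H | yCoord τ.1 ≠ 0} : Finset H).image (fun τ ↦ xCoord τ.1)).card := by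
    rw [denominator, natDegree_prod_of_monic _ _ fun ξ _ ↦ (monic_X_sub_C ξ).pow 3]
    simp [mul_comm]
  have hfiber : 2 * (({τ : H | yCoord τ.1 ≠ 0} : Finset H).image (fun τ ↦ xCoord τ.1)).card ≤
      ({τ : H | yCoord τ.1 ≠ 0} : Finset H).card := by
    refine Finset.mul_card_image_le_card _ _ (Finset.forall_mem_image.mpr fun τ hτ ↦ ?_)
    have hy : yCoord τ.1 ≠ 0 := (Finset.mem_filter.mp hτ).2
    have hτ0 : τ.1 ≠ 0 := fun h ↦ hy (h ▸ yCoord_zero)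
    have hne : τ ≠ -τ := fun h ↦
      hy ((neg_eq_self_iff_yCoord hτ0).mp (congrArg Subtype.val h).symm)
    rw [← Finset.card_pair hne]
    refine Finset.card_le_card ?_
    simp [Finset.insert_subset_iff, hy, yCoord_neg, xCoord_neg]
  omega

lemma card_yCoord_ne_zero_lt : ({τ : H | yCoord τ.1 ≠ 0} : Finset H).card + 1 ≤ Fintype.card H :=
  Finset.card_lt_univ_of_notMem (x := 0) (by simp [yCoord_zero])

lemma card_yCoord_ne_zero_add_four_le [CharP F 3] (hg : g ≠ 0) (hH : H ≤ H.comap shift)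
    {T : (curve g).Point} (hT : T ∈ H) (hT0 : T ≠ 0) (hyT : yCoord T = 0) :
    ({τ : H | yCoord τ.1 ≠ 0} : Finset H).card + 4 ≤ Fintype.card H := by
  have hσ := shift_ne_zero hT0
  have hσσ := shift_ne_zero hσ
  have hne {Q : (curve g).Point} (hQ : Q ≠ 0) : shift Q ≠ Q := fun h ↦
    hQ (eq_zero_of_shift_eq_self hg h)
  have hne' : shift (shift T) ≠ T := fun h ↦ by
    have := congrArg xCoord h
    rw [xCoord_shift hσ, xCoord_shift hT0] at this
    exact hg (by linear_combination g * three_eq_zero (F := F) - this)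
  have hcard : ({0, T, shift T, shift (shift T)} : Finset (curve g).Point).card = 4 := by
    rw [Finset.card_insert_of_notMem (by simp [hT0.symm, hσ.symm, hσσ.symm]),
      Finset.card_insert_of_notMem (by simp [(hne hT0).symm, hne'.symm]),
      Finset.card_pair (hne hσ).symm]
  have hsub : ({0, T, shift T, shift (shift T)} : Finset (curve g).Point) ⊆
      ({τ : H | yCoord τ.1 = 0} : Finset H).image Subtype.val := by
    have hHσ := hH hT
    simp only [Finset.insert_subset_iff, Finset.singleton_subset_iff, Finset.mem_image,
      Finset.mem_filter, Finset.mem_univ, true_and]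
    exact ⟨⟨0, yCoord_zero, rfl⟩, ⟨⟨T, hT⟩, hyT, rfl⟩, ⟨⟨_, hHσ⟩, (yCoord_shift T).trans hyT, rfl⟩,
      ⟨⟨_, hH hHσ⟩, by simp [yCoord_shift, hyT], rfl⟩⟩
  have := (Finset.card_le_card hsub).trans Finset.card_image_le
  have hsplit := Finset.card_filter_add_card_filter_not (s := Finset.univ)
    fun τ : H ↦ yCoord τ.1 = 0
  simp only [Finset.card_univ, ← ne_eq] at hsplit
  omega

end Denominator

section InvariantFunction

open Polynomial WeierstrassCurve WeierstrassCurve.Affine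

variable {F : Type*} [Field F] [DecidableEq F] [CharP F 3] {g : F}
  {H : AddSubgroup (curve g).Point} [Fintype H]

/-- The functions `ψ` and `G` present `subgroupTrace H` as the fraction `G / ψ` off `H`. -/
structure IsTraceFraction (H : AddSubgroup (curve g).Point) [Fintype H]
    (ψ G : (curve g).CoordinateRing) : Prop where
  denom_mem : ψ ∈ poleSpace (curve g) (3 * Fintype.card H - 3)
  num_mem : G ∈ poleSpace (curve g) (3 * Fintype.card H)
  denom_ne_zero : ∀ P ∉ H, ev P ψ ≠ 0
  num_eq : ∀ P ∉ H, ev P G = subgroupTrace H P * ev P ψ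
  num_ne_smul : ∀ β : F, G ≠ β • ψ

-- Without 2-torsion in `H` the invariant function is `y B(x) / D(x)`.
lemma exists_isTraceFraction_of_forall_yCoord_ne_zero (hy : ∀ τ ∈ H, τ ≠ 0 → yCoord τ ≠ 0) :
    ∃ ψ G, IsTraceFraction H ψ G := by
  obtain ⟨B, hB0, hBdeg, hB⟩ := exists_subgroupTrace_mul_eval_eq (monic_denominator H)
    fun τ hτ hτ0 ↦ (X_sub_C_pow_dvd_denominator hτ (hy τ hτ hτ0)).mul_left _
  have hdeg := two_mul_natDegree_denominator_le (H := H)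
  have hcard := card_yCoord_ne_zero_lt (H := H)
  refine ⟨coordinateRingEquiv _ (denominator H, 0), coordinateRingEquiv _ (0, B),
    ?_, ?_, fun P hP ↦ ?_, fun P hP ↦ ?_, fun β h ↦ ?_⟩
  · exact coordinateRingEquiv_mem_poleSpace_of_natDegree_le (by omega) (.inr rfl)
  · exact coordinateRingEquiv_mem_poleSpace_of_natDegree_le (by simp) (.inl (by omega))
  · simpa [ev_coordinateRingEquiv] using eval_denominator_ne_zero hP
  · simp only [ev_coordinateRingEquiv, eval_zero, zero_add, zero_mul, add_zero]
    rw [hB P hP, mul_comm]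
  · rw [← map_smul, EmbeddingLike.apply_eq_iff_eq, Prod.smul_mk, Prod.mk.injEq, smul_zero] at h
    exact hB0 h.2

/-- The polynomial `x³ - g² x`, equal to `y²` on the curve. -/
noncomputable def cubic (g : F) : F[X] := X ^ 3 - C (g ^ 2) * X

omit [DecidableEq F] [CharP F 3] in
lemma monic_cubic : (cubic g).Monic := by
  unfold cubic
  monicity!

omit [DecidableEq F] [CharP F 3] in
lemma natDegree_cubic : (cubic g).natDegree = 3 := by
  unfold cubic
  compute_degree!

omit [DecidableEq F] [CharP F 3] in
lemma eval_cubic_xCoord (P : (curve g).Point) : (cubic g).eval (xCoord P) = yCoord P ^ 2 := by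
  simp [cubic, yCoord_sq]

omit [CharP F 3] in
lemma X_sub_C_pow_dvd_mul_denominator_mul_cubic_sq {τ : (curve g).Point} (hτ : τ ∈ H) :
    (X - C (xCoord τ)) ^ 3 ∣ (C (yCoord τ ^ 2) - C (g ^ 2) * (X - C (xCoord τ))) *
      (denominator H * cubic g ^ 2) := by
  by_cases hy : yCoord τ = 0
  · have hroot : X - C (xCoord τ) ∣ cubic g :=
      dvd_iff_isRoot.mpr (by simp [eval_cubic_xCoord, hy])
    obtain ⟨e, he⟩ := hroot
    refine ⟨-C (g ^ 2) * denominator H * e ^ 2, ?_⟩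
    rw [he, hy, zero_pow two_ne_zero, C_0]
    ring
  · exact ((X_sub_C_pow_dvd_denominator hτ hy).mul_right _).mul_left _

omit [Fintype H] in
lemma yCoord_ne_zero_of_notMem (hH : H ≤ H.comap shift) {T : (curve g).Point} (hT : T ∈ H)
    (hT0 : T ≠ 0) (hyT : yCoord T = 0) {P : (curve g).Point} (hP : P ∉ H) : yCoord P ≠ 0 := by
  intro hyP
  have hP0 : P ≠ 0 := (ne_of_mem_of_not_mem H.zero_mem hP).symm
  rcases eq_or_eq_shift_of_yCoord_eq_zero hP0 hT0 hyP hyT with rfl | rfl | rfl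
  exacts [hP hT, hP (hH hT), hP (hH (hH hT))]

-- With 2-torsion in `H` the invariant function is `B(x) / (f(x) D(x) y)`, where `f = cubic g`.
lemma exists_isTraceFraction_of_yCoord_eq_zero (hg : g ≠ 0) (hH : H ≤ H.comap shift)
    {T : (curve g).Point} (hT : T ∈ H) (hT0 : T ≠ 0) (hyT : yCoord T = 0) :
    ∃ ψ G, IsTraceFraction H ψ G := by
  obtain ⟨B, hB0, hBdeg, hB⟩ := exists_subgroupTrace_mul_eval_eq
    ((monic_denominator H).mul (monic_cubic.pow 2)) fun τ hτ _ ↦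
      X_sub_C_pow_dvd_mul_denominator_mul_cubic_sq hτ
  rw [(monic_denominator H).natDegree_mul (monic_cubic.pow 2), natDegree_pow, natDegree_cubic]
    at hBdeg
  have hdeg := two_mul_natDegree_denominator_le (H := H)
  have hcard := card_yCoord_ne_zero_add_four_le hg hH hT hT0 hyT
  have hyne {P : (curve g).Point} (hP : P ∉ H) := yCoord_ne_zero_of_notMem hH hT hT0 hyT hP
  refine ⟨coordinateRingEquiv _ (0, cubic g * denominator H), coordinateRingEquiv _ (B, 0),
    ?_, ?_, fun P hP ↦ ?_, fun P hP ↦ ?_, fun β h ↦ ?_⟩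
  · refine coordinateRingEquiv_mem_poleSpace_of_natDegree_le (by simp) (.inl ?_)
    rw [monic_cubic.natDegree_mul (monic_denominator H), natDegree_cubic]
    omega
  · exact coordinateRingEquiv_mem_poleSpace_of_natDegree_le (by omega) (.inr rfl)
  · simpa [ev_coordinateRingEquiv, eval_cubic_xCoord, hyne hP] using eval_denominator_ne_zero hP
  · have hBP := hB P hP
    rw [eval_mul, eval_pow, eval_cubic_xCoord] at hBP
    simp only [ev_coordinateRingEquiv, eval_mul, eval_zero, zero_mul, add_zero, zero_add,
      eval_cubic_xCoord]
    refine mul_left_cancel₀ (hyne hP) ?_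
    linear_combination -hBP
  · rw [← map_smul, EmbeddingLike.apply_eq_iff_eq, Prod.smul_mk, Prod.mk.injEq, smul_zero] at h
    exact hB0 h.1

theorem exists_isTraceFraction (hg : g ≠ 0) (hH : H ≤ H.comap shift) :
    ∃ ψ G, IsTraceFraction H ψ G := by
  by_cases hy : ∀ τ ∈ H, τ ≠ 0 → yCoord τ ≠ 0
  · exact exists_isTraceFraction_of_forall_yCoord_ne_zero hy
  · push Not at hy
    obtain ⟨T, hT, hT0, hyT⟩ := hy
    exact exists_isTraceFraction_of_yCoord_eq_zero hg hH hT hT0 hyT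

end InvariantFunction

section Vandermonde

variable {F V : Type*} [Field F] [AddCommGroup V] [Module F V] {m t : ℕ}

lemma eq_zero_of_sum_pow_smul_eq_zero (htm : t < m) {β : Fin m → F} (hβ : Function.Injective β)
    {v : Fin (t + 1) → V} (h : ∀ j, ∑ k : Fin (t + 1), β j ^ (k : ℕ) • v k = 0) : v = 0 := by
  funext k
  refine (Module.forall_dual_apply_eq_zero_iff F _).mp fun φ ↦ ?_
  refine congrFun (Matrix.eq_zero_of_forall_index_sum_pow_mul_eq_zero
    (hβ.comp (Fin.castLE_injective htm)) (v := φ ∘ v) fun j ↦ ?_) k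
  simpa using congrArg φ (h (Fin.castLE htm j))

end Vandermonde

section RepairSystem

open Polynomial

variable {F K : Type*} [Field F] [CommRing K] [Algebra F K] {U : Submodule F K}

/-- The function `∑ₖ uₖ Gᵏ ψᵗ⁻¹⁻ᵏ + a Gᵗ` attached to a message `((uₖ), a)`. -/
noncomputable def globalFun (t : ℕ) (ψ : U) (G : K) : (Fin t → U) × F →ₗ[F] K :=
  (LinearMap.lsum F (fun _ : Fin t ↦ U) F fun k ↦
    LinearMap.mulRight F (G ^ (k : ℕ) * (ψ : K) ^ (t - 1 - k)) ∘ₗ U.subtype).coprod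
    (LinearMap.toSpanSingleton F K (G ^ t))

/-- The element `∑ₖ bᵏ uₖ + bᵗ a ψ` attached to a message `((uₖ), a)`: up to the unit `ψᵗ⁻¹`, this
is what `globalFun` becomes at the points where `G = b ψ`. -/
noncomputable def localFun (t : ℕ) (ψ : U) (b : F) : (Fin t → U) × F →ₗ[F] U :=
  (LinearMap.lsum F (fun _ : Fin t ↦ U) F fun k ↦ b ^ (k : ℕ) • LinearMap.id).coprod
    (b ^ t • LinearMap.toSpanSingleton F U ψ)

variable {t : ℕ}

lemma globalFun_apply (ψ : U) (G : K) (x : (Fin t → U) × F) : globalFun t ψ G x =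
    ∑ k : Fin t, (x.1 k : K) * (G ^ (k : ℕ) * (ψ : K) ^ (t - 1 - k)) + x.2 • G ^ t := by
  simp [globalFun, mul_assoc]

lemma localFun_apply (ψ : U) (b : F) (x : (Fin t → U) × F) :
    localFun t ψ b x = ∑ k : Fin t, b ^ (k : ℕ) • x.1 k + b ^ t • x.2 • ψ := by
  simp [localFun]

lemma apply_globalFun (ht : 1 ≤ t) {ψ : U} {G : K} {b : F} {χ : K →ₐ[F] F}
    (hG : χ G = b * χ ψ) (x : (Fin t → U) × F) :
    χ (globalFun t ψ G x) = χ ψ ^ (t - 1) * χ (localFun t ψ b x) := by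
  simp only [globalFun_apply, localFun_apply, map_add, map_sum, map_mul, map_pow, map_smul,
    hG, Submodule.coe_add, Submodule.coe_sum, Submodule.coe_smul, smul_eq_mul, mul_add,
    Finset.mul_sum]
  refine congrArg₂ _ (Finset.sum_congr rfl fun k _ ↦ ?_) ?_
  · rw [← pow_mul_pow_sub (χ ψ) (by omega : (k : ℕ) ≤ t - 1)]
    ring
  · obtain ⟨n, rfl⟩ := Nat.exists_eq_add_of_le' ht
    rw [Nat.add_sub_cancel]
    ring

lemma eq_zero_of_localFun_eq_zero {m : ℕ} (htm : t < m) {ψ : U} (hψ : ψ ≠ 0) {β : Fin m → F}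
    (hβ : Function.Injective β) {x : (Fin t → U) × F} (h : ∀ j, localFun t ψ (β j) x = 0) :
    x = 0 := by
  have hsnoc : (Fin.snoc x.1 (x.2 • ψ) : Fin (t + 1) → U) = 0 :=
    eq_zero_of_sum_pow_smul_eq_zero htm hβ fun j ↦ by
      simpa [Fin.sum_univ_castSucc, ← localFun_apply] using h j
  have hfst : x.1 = 0 := funext fun k ↦ by simpa using congrFun hsnoc k.castSucc
  have hsnd : x.2 = 0 := by simpa [hψ] using congrFun hsnoc (Fin.last t)
  exact Prod.ext hfst hsnd

lemma exists_localFun_eq_prod_smul (ψ : U) (b : Fin t → F) :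
    ∃ x : (Fin t → U) × F, ∀ c, localFun t ψ c x = (∏ i, (c - b i)) • ψ := by
  let p : F[X] := ∏ i, (X - C (b i))
  have hp : p.Monic := monic_prod_of_monic _ _ fun i _ ↦ monic_X_sub_C (b i)
  have hdeg : p.natDegree = t := by
    rw [natDegree_prod_of_monic _ _ fun i _ ↦ monic_X_sub_C (b i)]
    simp
  refine ⟨(fun k ↦ p.coeff k • ψ, 1), fun c ↦ ?_⟩
  have heval : p.eval c = ∑ k : Fin t, c ^ (k : ℕ) * p.coeff k + c ^ t := by
    rw [eval_eq_sum_range, hdeg, Finset.sum_range_succ, Finset.sum_range, ← hdeg,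
      hp.coeff_natDegree, one_mul, hdeg]
    simp only [mul_comm]
  have hprod : ∏ i, (c - b i) = p.eval c := by simp [p, eval_prod]
  rw [localFun_apply, hprod, heval, add_smul, Finset.sum_smul]
  simp only [smul_smul, one_smul]

variable {N m : ℕ}

/-- The linear map sending a message to the values of its `globalFun` at the `N m` points `e`. -/
noncomputable def encode (t : ℕ) (ψ : U) (G : K) (e : Fin N × Fin m → K →ₐ[F] F) :
    (Fin t → U) × F →ₗ[F] (Fin (N * m) → F) :=
  LinearMap.pi fun n ↦ (e (finProdFinEquiv.symm n)).toLinearMap ∘ₗ globalFun t ψ G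

lemma encode_apply (ψ : U) (G : K) (e : Fin N × Fin m → K →ₐ[F] F) (x : (Fin t → U) × F)
    (p : Fin N × Fin m) : encode t ψ G e x (finProdFinEquiv p) = e p (globalFun t ψ G x) := by
  simp only [encode, LinearMap.pi_apply, Equiv.symm_apply_apply, LinearMap.comp_apply,
    AlgHom.toLinearMap_apply]

variable [DecidableEq F]

/-- The evaluation points `e` come in `m` blocks of `N` points. On the `j`-th block `G = βⱼ ψ`, and
a nonzero element of `U` has at least `δ` nonzero values; moreover no nonzero `globalFun` has more
than `N t` zeros. -/
structure IsRepairSystem (t δ : ℕ) (ψ : U) (G : K) (e : Fin N × Fin m → K →ₐ[F] F)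
    (β : Fin m → F) : Prop where
  injective : Function.Injective β
  ne_zero : ∀ p, e p ψ ≠ 0
  eq_mul : ∀ p, e p G = β p.2 * e p ψ
  card_block_zeros_add_le : ∀ j, ∀ u : U, u ≠ 0 →
    ({i | e (i, j) u = 0} : Finset (Fin N)).card + δ ≤ N
  card_zeros_le : ∀ x : (Fin t → U) × F, globalFun t ψ G x ≠ 0 →
    ({p | e p (globalFun t ψ G x) = 0} : Finset (Fin N × Fin m)).card ≤ N * t

lemma hammingWt_add_card_filter_eq_zero (c : Fin (N * m) → F) :
    hammingWt c + ({p | c (finProdFinEquiv p) = 0} : Finset (Fin N × Fin m)).card = N * m := by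
  have hwt : hammingWt c = ({p | c (finProdFinEquiv p) ≠ 0} : Finset (Fin N × Fin m)).card :=
    (Finset.card_equiv finProdFinEquiv fun p ↦ by simp).symm
  rw [hwt, add_comm, Finset.card_filter_add_card_filter_not]
  simp

namespace IsRepairSystem

variable {δ : ℕ} {ψ : U} {G : K} {e : Fin N × Fin m → K →ₐ[F] F} {β : Fin m → F}

lemma encode_eq_zero_iff (h : IsRepairSystem t δ ψ G e β) (ht : 1 ≤ t) (x : (Fin t → U) × F)
    (p : Fin N × Fin m) :
    encode t ψ G e x (finProdFinEquiv p) = 0 ↔ e p (localFun t ψ (β p.2) x) = 0 := by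
  rw [encode_apply, apply_globalFun ht (h.eq_mul p),
    mul_eq_zero_iff_left (pow_ne_zero _ (h.ne_zero p))]

lemma injective_encode (h : IsRepairSystem t δ ψ G e β) (ht : 1 ≤ t) (htm : t < m) (hδ : 1 ≤ δ)
    (hψ : ψ ≠ 0) : Function.Injective (encode t ψ G e) := by
  refine (injective_iff_map_eq_zero _).mpr fun x hx ↦
    eq_zero_of_localFun_eq_zero htm hψ h.injective fun j ↦ ?_
  by_contra hne
  have hzero (i : Fin N) : e (i, j) (localFun t ψ (β j) x) = 0 :=
    (h.encode_eq_zero_iff ht x (i, j)).mp (by rw [hx, Pi.zero_apply])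
  have hcard := h.card_block_zeros_add_le j _ hne
  simp only [hzero, Finset.filter_true, Finset.card_fin] at hcard
  omega

lemma minDistGe (h : IsRepairSystem t δ ψ G e β) :
    MinDistGe (LinearMap.range (encode t ψ G e)) (N * (m - t)) := by
  rintro _ ⟨x, rfl⟩ hx
  have hne : globalFun t ψ G x ≠ 0 := fun h0 ↦ hx <| funext fun n ↦ by
    simp [encode, h0]
  have hzeros := h.card_zeros_le x hne
  have hwt := hammingWt_add_card_filter_eq_zero (encode t ψ G e x)
  simp only [encode_apply] at hwt
  rw [Nat.mul_sub]
  omega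

lemma exists_hammingWt_eq (h : IsRepairSystem t δ ψ G e β) (ht : 1 ≤ t) (htm : t < m)
    (hN : 1 ≤ N) : ∃ c ∈ LinearMap.range (encode t ψ G e), c ≠ 0 ∧
      hammingWt c = N * (m - t) := by
  obtain ⟨x, hx⟩ := exists_localFun_eq_prod_smul ψ fun i ↦ β (Fin.castLE htm.le i)
  have hzero (p : Fin N × Fin m) : encode t ψ G e x (finProdFinEquiv p) = 0 ↔ (p.2 : ℕ) < t := by
    rw [h.encode_eq_zero_iff ht, hx, Submodule.coe_smul, map_smul, smul_eq_mul,
      mul_eq_zero_iff_right (h.ne_zero p), Finset.prod_eq_zero_iff]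
    simp only [Finset.mem_univ, true_and, sub_eq_zero, h.injective.eq_iff]
    exact ⟨fun ⟨i, hi⟩ ↦ hi ▸ i.2, fun hp ↦ ⟨⟨p.2, hp⟩, rfl⟩⟩
  have hcard : ({p | (p.2 : ℕ) < t} : Finset (Fin N × Fin m)).card = N * t := by
    rw [← Finset.univ_product_univ, Finset.filter_product_right (fun j : Fin m ↦ (j : ℕ) < t),
      Finset.card_product, Fin.card_filter_val_lt, min_eq_right htm.le, Finset.card_fin]
  have hwt := hammingWt_add_card_filter_eq_zero (encode t ψ G e x)
  simp only [hzero, hcard] at hwt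
  refine ⟨_, ⟨x, rfl⟩, fun h0 ↦ ?_, by rw [Nat.mul_sub]; omega⟩
  exact absurd ((hzero (⟨0, hN⟩, ⟨t, htm⟩)).mp (by rw [h0, Pi.zero_apply])) (lt_irrefl t)

lemma isLRC (h : IsRepairSystem t δ ψ G e β) (ht : 1 ≤ t) {r : ℕ} (hN : N ≤ r + δ - 1) :
    IsLRC (LinearMap.range (encode t ψ G e)) r δ := by
  intro n
  obtain ⟨⟨i, j⟩, rfl⟩ := finProdFinEquiv.surjective n
  let block : Fin N ↪ Fin (N * m) := ⟨fun i ↦ finProdFinEquiv (i, j), fun _ _ h ↦ by simpa using h⟩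
  refine ⟨Finset.univ.map block, Finset.mem_map_of_mem block (Finset.mem_univ i), by simpa, ?_⟩
  rintro _ ⟨x, rfl⟩ ⟨_, hn, hne⟩
  obtain ⟨i', -, rfl⟩ := Finset.mem_map.mp hn
  have hlocal : localFun t ψ (β j) x ≠ 0 := fun h0 ↦
    hne ((h.encode_eq_zero_iff ht x (i', j)).mpr (by rw [h0, ZeroMemClass.coe_zero, map_zero]))
  have hcard := h.card_block_zeros_add_le j _ hlocal
  have hsplit := Finset.card_filter_add_card_filter_not (s := (Finset.univ : Finset (Fin N)))
    fun i ↦ e (i, j) (localFun t ψ (β j) x) = 0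
  have hiff (i : Fin N) : encode t ψ G e x (block i) = 0 ↔ e (i, j) (localFun t ψ (β j) x) = 0 :=
    h.encode_eq_zero_iff ht x (i, j)
  rw [Finset.card_fin] at hsplit
  simp only [Finset.filter_map, Finset.card_map, Function.comp_def, ne_eq, hiff]
  omega

end IsRepairSystem

lemma singletonOptimal_of_add_eq {r δ : ℕ} (hr : 1 ≤ r) (hN : r + δ = N + 1) (htm : t < m) :
    SingletonOptimal (N * m) (r * t + 1) (N * (m - t)) r δ := by
  have hceil : (r * t + 1 + r - 1) / r = t + 1 := by
    rw [show r * t + 1 + r - 1 = r * (t + 1) by rw [mul_add]; omega, Nat.mul_div_cancel_left _ hr]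
  have hδ : (r : ℤ) + δ = N + 1 := by exact_mod_cast hN
  rw [SingletonOptimal, hceil]
  push_cast [Nat.cast_sub htm.le]
  linear_combination t * hδ

theorem IsRepairSystem.existsOptimalLRC {δ : ℕ} {ψ : U} {G : K}
    {e : Fin N × Fin m → K →ₐ[F] F} {β : Fin m → F} (h : IsRepairSystem t δ ψ G e β)
    [FiniteDimensional F U] (ht : 1 ≤ t) (htm : t < m) (hδ : 1 ≤ δ)
    (hU : 1 ≤ Module.finrank F U) (hN : Module.finrank F U + δ = N + 1) :
    ExistsOptimalLRC F (N * m) (Module.finrank F U * t + 1) (N * (m - t))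
      (Module.finrank F U) δ := by
  have hN1 : 1 ≤ N := by omega
  have hψ : ψ ≠ 0 := fun h0 ↦ h.ne_zero (⟨0, hN1⟩, ⟨t, htm⟩) (by simp [h0])
  refine ⟨LinearMap.range (encode t ψ G e), ?_, ⟨h.minDistGe, h.exists_hammingWt_eq ht htm hN1⟩,
    h.isLRC ht (by omega), singletonOptimal_of_add_eq hU hN htm⟩
  rw [LinearMap.finrank_range_of_inj (h.injective_encode ht htm hδ hψ), Module.finrank_prod,
    Module.finrank_pi_fintype]
  simp [mul_comm]

end RepairSystem

section OrbitCosets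

variable {A : Type*} [AddCommGroup A] {σ : A →+ A}

lemma map_map_map_eq_self (hσ : ∀ a, a + σ a + σ (σ a) = 0) (a : A) : σ (σ (σ a)) = a :=
  add_left_cancel (((hσ (σ a)).trans (hσ a).symm).trans (by abel : _ = σ a + σ (σ a) + a))

lemma add_ne_zero_of_mem_orbit (hσ : ∀ a, a + σ a + σ (σ a) = 0) {a b c : A} (ha : a + a ≠ 0)
    (hb : b ∈ ({a, σ a, σ (σ a)} : Set A)) (hc : c ∈ ({a, σ a, σ (σ a)} : Set A)) :
    b + c ≠ 0 := by
  have hmap {x : A} (hx : x ≠ 0) : σ x ≠ 0 := fun h ↦ hx <| by simpa [h] using hσ x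
  have hpair {x y z : A} (hz : z ≠ 0) (h : x + y + z = 0) : x + y ≠ 0 := fun h0 ↦
    hz (by simpa [h0] using h)
  have ha0 : a ≠ 0 := fun h ↦ ha (by rw [h, add_zero])
  have h01 : a + σ a ≠ 0 := hpair (hmap (hmap ha0)) (hσ a)
  have h12 : σ a + σ (σ a) ≠ 0 := by simpa using hmap h01
  have h02 : a + σ (σ a) ≠ 0 := hpair (hmap ha0) ((add_right_comm _ _ _).trans (hσ a))
  have h11 : σ a + σ a ≠ 0 := by simpa using hmap ha
  have h22 : σ (σ a) + σ (σ a) ≠ 0 := by simpa using hmap h11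
  rcases hb with rfl | rfl | rfl <;> rcases hc with rfl | rfl | rfl <;>
    first | assumption | rwa [add_comm]

lemma ncard_orbit (hσ : ∀ a, a + σ a + σ (σ a) = 0) (hfix : ∀ a, σ a = a → a = 0) {a : A}
    (ha : a ≠ 0) : ({a, σ a, σ (σ a)} : Set A).ncard = 3 := by
  have h3 : a = σ (σ (σ a)) := (map_map_map_eq_self hσ a).symm
  have h01 : a ≠ σ a := fun h ↦ ha (hfix a h.symm)
  have h02 : a ≠ σ (σ a) := fun h ↦ h01 (h3.trans (congrArg σ h).symm)
  have h12 : σ a ≠ σ (σ a) := fun h ↦ h02 (h3.trans (congrArg σ h).symm)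
  exact Set.ncard_eq_three.mpr ⟨_, _, _, h01, h02, h12, rfl⟩

variable {H : AddSubgroup A}

-- As `σ - 1` is injective it permutes the finite group `H`, so `σ a - a ∈ H` forces `a ∈ H`.
lemma eq_zero_of_quotient_map_eq_self [Finite H] (hfix : ∀ a, σ a = a → a = 0)
    (hH : H ≤ H.comap σ) (x : A ⧸ H) (hx : QuotientAddGroup.map H H σ hH x = x) : x = 0 := by
  obtain ⟨a, rfl⟩ := QuotientAddGroup.mk_surjective x
  let f : H → H := fun τ ↦ ⟨σ τ - τ, sub_mem (hH τ.2) τ.2⟩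
  have hf : Function.Injective f := fun τ ρ h ↦ by
    have h' : σ τ - τ = σ ρ - ρ := congrArg Subtype.val h
    refine Subtype.ext (sub_eq_zero.mp (hfix _ ?_))
    rw [map_sub]
    exact sub_eq_sub_iff_sub_eq_sub.mp h'
  have ha : σ a - a ∈ H := QuotientAddGroup.eq_iff_sub_mem.mp hx
  obtain ⟨τ, hτ⟩ := Finite.surjective_of_injective hf ⟨_, ha⟩
  have hτ' : σ τ - τ = σ a - a := congrArg Subtype.val hτ
  have hτa : a - τ = 0 := hfix _ <| by
    rw [map_sub]
    exact sub_eq_sub_iff_sub_eq_sub.mp hτ'.symm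
  rw [sub_eq_zero.mp hτa, QuotientAddGroup.eq_zero_iff]
  exact τ.2

/-- The union of the cosets of `H` through the orbit `P, σ P, σ (σ P)`, which serves as a repair
group of the codes. -/
def orbitCosets (σ : A →+ A) (H : AddSubgroup A) (P : A) : Set A :=
  (↑) ⁻¹' ({(P : A ⧸ H), (σ P : A ⧸ H), (σ (σ P) : A ⧸ H)} : Set (A ⧸ H))

lemma add_map_add_map_map_quotient (hσ : ∀ a, a + σ a + σ (σ a) = 0) (hH : H ≤ H.comap σ)
    (x : A ⧸ H) : x + QuotientAddGroup.map H H σ hH x +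
      QuotientAddGroup.map H H σ hH (QuotientAddGroup.map H H σ hH x) = 0 := by
  obtain ⟨a, rfl⟩ := QuotientAddGroup.mk_surjective x
  exact congrArg QuotientAddGroup.mk (hσ a)

lemma card_orbitCosets [Finite H] (hσ : ∀ a, a + σ a + σ (σ a) = 0)
    (hfix : ∀ a, σ a = a → a = 0) (hH : H ≤ H.comap σ) {P : A} (hP : P ∉ H) :
    Nat.card (orbitCosets σ H P) = 3 * Nat.card H := by
  have hP' : (P : A ⧸ H) ≠ 0 := (QuotientAddGroup.eq_zero_iff P).not.mpr hP
  rw [orbitCosets, card_preimage_mk, mul_comm]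
  exact congrArg (· * _) (ncard_orbit (add_map_add_map_map_quotient hσ hH)
    (eq_zero_of_quotient_map_eq_self hfix hH) hP')

lemma add_notMem_of_mem_orbitCosets (hσ : ∀ a, a + σ a + σ (σ a) = 0) (hH : H ≤ H.comap σ)
    {P Q R : A} (hP : P + P ∉ H) (hQ : Q ∈ orbitCosets σ H P) (hR : R ∈ orbitCosets σ H P) :
    Q + R ∉ H := by
  rw [← QuotientAddGroup.eq_zero_iff] at hP ⊢
  exact add_ne_zero_of_mem_orbit (add_map_add_map_map_quotient hσ hH) hP hQ hR

lemma map_mem_orbitCosets (hσ : ∀ a, a + σ a + σ (σ a) = 0) (hH : H ≤ H.comap σ) {P Q : A}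
    (hQ : Q ∈ orbitCosets σ H P) : σ Q ∈ orbitCosets σ H P := by
  have hmap {R : A} (h : (Q : A ⧸ H) = R) : (σ Q : A ⧸ H) = σ R :=
    congrArg (QuotientAddGroup.map H H σ hH) h
  rcases hQ with hQ | hQ | hQ
  · exact .inr (.inl (hmap hQ))
  · exact .inr (.inr (hmap hQ))
  · refine .inl ((hmap hQ).trans ?_)
    rw [map_map_map_eq_self hσ]

lemma sum_orbitCosets (hσ : ∀ a, a + σ a + σ (σ a) = 0) (hfix : ∀ a, σ a = a → a = 0)
    (hH : H ≤ H.comap σ) (P : A) [Fintype (orbitCosets σ H P)] :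
    ∑ Q : orbitCosets σ H P, Q.1 = 0 := by
  let f : orbitCosets σ H P → orbitCosets σ H P := fun Q ↦ ⟨σ Q, map_mem_orbitCosets hσ hH Q.2⟩
  have hf : Function.LeftInverse (fun Q ↦ f (f Q)) f := fun Q ↦
    Subtype.ext (map_map_map_eq_self hσ Q.1)
  refine hfix _ ?_
  rw [map_sum]
  exact (Finite.injective_iff_bijective.mp hf.injective).sum_comp Subtype.val

end OrbitCosets

section LocalZeros

open WeierstrassCurve.Affine

lemma card_zeros_add_three_le {F ι : Type*} [Field F] [DecidableEq F] [Fintype ι]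
    {W : WeierstrassCurve.Affine F} {k : ℕ} {u : W.CoordinateRing} (pt : ι ↪ W.Point)
    (hadd : ∀ i j, pt i + pt j ≠ 0) (hsum : ∑ i, pt i = 0) (hk : k + 2 = Fintype.card ι)
    (hu : u ∈ poleSpace W k) (hu0 : u ≠ 0) {Z : Finset ι} (hZ : ∀ i ∈ Z, u ∈ pointIdeal (pt i)) :
    Z.card + 3 ≤ Fintype.card ι := by
  classical
  have hZ0 : 0 ∉ Z.map pt := fun h ↦ by
    obtain ⟨i, -, hi⟩ := Finset.mem_map.mp h
    exact hadd i i (by rw [hi, add_zero])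
  have hZu : ∀ P ∈ Z.map pt, u ∈ pointIdeal P := by simpa using hZ
  have hle := card_zeros_le hu hu0 hZ0 hZu
  rw [Finset.card_map] at hle
  by_contra hlt
  have hcard : Z.card = k := by omega
  have hsumZ : ∑ i ∈ Z, pt i = 0 := by
    have h := sum_zeros_eq_zero (by rwa [Finset.card_map, hcard]) hu0 hZ0 hZu
    rwa [Finset.sum_map] at h
  obtain ⟨i, j, hij, hZc⟩ := Finset.card_eq_two.mp
    (show Zᶜ.card = 2 by rw [Finset.card_compl]; omega)
  refine hadd i j ?_
  rw [← Finset.sum_pair hij, ← hZc, ← hsum, ← Finset.sum_add_sum_compl Z, hsumZ, zero_add]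

variable {F K ι : Type*} [Field F] [CommRing K] [Algebra F K] {χ : ι → K →ₐ[F] F} {x ψ : K}

lemma eq_zero_of_apply_smul_add_smul_eq_zero (hψ : ∀ i, χ i ψ ≠ 0)
    (hx : Function.Injective fun i ↦ χ i x) {a b : F} {i j : ι} (hij : i ≠ j)
    (hi : χ i (a • ψ + b • (x * ψ)) = 0) (hj : χ j (a • ψ + b • (x * ψ)) = 0) :
    a = 0 ∧ b = 0 := by
  have hzero {l : ι} (hl : χ l (a • ψ + b • (x * ψ)) = 0) : a + b * χ l x = 0 := by
    simp only [map_add, map_smul, map_mul, smul_eq_mul] at hl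
    refine (mul_eq_zero.mp ?_).resolve_right (hψ l)
    linear_combination hl
  have hb : b = 0 := by
    refine (mul_eq_zero.mp ?_).resolve_right (sub_ne_zero.mpr (hx.ne hij))
    linear_combination hzero hi - hzero hj
  exact ⟨by simpa [hb] using hzero hi, hb⟩

lemma finrank_span_pair_mul [Nontrivial ι] (hψ : ∀ i, χ i ψ ≠ 0)
    (hx : Function.Injective fun i ↦ χ i x) :
    Module.finrank F (Submodule.span F {ψ, x * ψ}) = 2 := by
  obtain ⟨i, j, hij⟩ := exists_pair_ne ι
  have hli : LinearIndependent F ![ψ, x * ψ] := LinearIndependent.pair_iff.mpr fun a b hab ↦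
    eq_zero_of_apply_smul_add_smul_eq_zero hψ hx hij (by rw [hab, map_zero])
      (by rw [hab, map_zero])
  rw [← Matrix.range_cons_cons_empty ψ (x * ψ) ![], finrank_span_eq_card hli, Fintype.card_fin]

lemma card_le_one_of_mem_span_pair_mul (hψ : ∀ i, χ i ψ ≠ 0)
    (hx : Function.Injective fun i ↦ χ i x) {u : K} (hu : u ∈ Submodule.span F {ψ, x * ψ})
    (hu0 : u ≠ 0) {Z : Finset ι} (hZ : ∀ i ∈ Z, χ i u = 0) : Z.card ≤ 1 := by
  obtain ⟨a, b, rfl⟩ := Submodule.mem_span_pair.mp hu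
  refine Finset.card_le_one.mpr fun i hi j hj ↦ ?_
  by_contra hij
  obtain ⟨rfl, rfl⟩ := eq_zero_of_apply_smul_add_smul_eq_zero hψ hx hij (hZ i hi) (hZ j hj)
  simp at hu0

end LocalZeros

section PointArray

open Polynomial WeierstrassCurve WeierstrassCurve.Affine

variable {F : Type*} [Field F] [DecidableEq F] {g : F} {H : AddSubgroup (curve g).Point}
  [Fintype H] {N m : ℕ}

/-- Distinct points in `m` blocks of `N` points, lying off `H`. The trace takes a constant value
`βⱼ` on each block, and each block has sum zero and contains no two points with sum zero. -/
structure IsPointArray (H : AddSubgroup (curve g).Point) [Fintype H]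
    (pt : Fin N × Fin m → (curve g).Point) (β : Fin m → F) : Prop where
  injective : Function.Injective pt
  injective_trace : Function.Injective β
  notMem : ∀ p, pt p ∉ H
  trace_eq : ∀ p, subgroupTrace H (pt p) = β p.2
  add_ne_zero : ∀ i i' j, pt (i, j) + pt (i', j) ≠ 0
  sum_eq_zero : ∀ j, ∑ i, pt (i, j) = 0

variable [CharP F 3]

lemma subgroupTrace_eq_of_mem_orbitCosets (hH : H ≤ H.comap shift) {P Q : (curve g).Point}
    (hQ : Q ∈ orbitCosets shift H P) : subgroupTrace H Q = subgroupTrace H P := by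
  have htrace {R : (curve g).Point} (h : (Q : (curve g).Point ⧸ H) = R) :
      subgroupTrace H Q = subgroupTrace H R := by
    rw [← subgroupTrace_add_of_mem R (QuotientAddGroup.eq.mp h.symm), add_neg_cancel_left]
  rcases hQ with hQ | hQ | hQ
  · exact htrace hQ
  · rw [htrace hQ, subgroupTrace_shift hH]
  · rw [htrace hQ, subgroupTrace_shift hH, subgroupTrace_shift hH]

theorem exists_isPointArray (hg : g ≠ 0) (hH : H ≤ H.comap shift) {P : Fin m → (curve g).Point}
    (hP : ∀ j, P j + P j ∉ H) (hinj : Function.Injective fun j ↦ subgroupTrace H (P j)) :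
    ∃ pt : Fin (3 * Fintype.card H) × Fin m → (curve g).Point,
      IsPointArray H pt fun j ↦ subgroupTrace H (P j) := by
  have hσ := add_shift_add_shift_shift hg
  have hfix (Q : (curve g).Point) (hQ : shift Q = Q) : Q = 0 := eq_zero_of_shift_eq_self hg hQ
  have hcard (j : Fin m) : Nat.card (orbitCosets shift H (P j)) = 3 * Fintype.card H := by
    rw [card_orbitCosets hσ hfix hH fun h ↦ hP j (H.add_mem h h), Nat.card_eq_fintype_card]
  have hfinite (j : Fin m) : Finite (orbitCosets shift H (P j)) :=
    Nat.finite_of_card_ne_zero (by rw [hcard]; positivity)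
  let E (j : Fin m) := (Finite.equivFinOfCardEq (hcard j)).symm
  have hmem (p : Fin (3 * Fintype.card H) × Fin m) := (E p.2 p.1).2
  have hadd (p : Fin (3 * Fintype.card H) × Fin m) (R : (curve g).Point)
      (hR : R ∈ orbitCosets shift H (P p.2)) : (E p.2 p.1).1 + R ∉ H :=
    add_notMem_of_mem_orbitCosets hσ hH (hP p.2) (hmem p) hR
  have htrace (p : Fin (3 * Fintype.card H) × Fin m) :=
    subgroupTrace_eq_of_mem_orbitCosets hH (hmem p)
  refine ⟨fun p ↦ (E p.2 p.1).1, fun p p' h ↦ ?_, hinj,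
    fun p h ↦ hadd p _ (hmem p) (H.add_mem h h), htrace,
    fun i i' j h ↦ hadd (i, j) _ (hmem (i', j)) (h ▸ H.zero_mem), fun j ↦ ?_⟩
  · have hj : p.2 = p'.2 :=
      hinj ((htrace p).symm.trans ((congrArg (subgroupTrace H) h).trans (htrace p')))
    obtain ⟨⟨i, j⟩, ⟨i', j'⟩⟩ := p, p'
    subst hj
    exact congrArg (·, j) ((E j).injective (Subtype.ext h))
  · have := Fintype.ofFinite (orbitCosets shift H (P j))
    exact ((E j).sum_comp Subtype.val).trans (sum_orbitCosets hσ hfix hH (P j))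

end PointArray

section PointArrayCodes

open Polynomial WeierstrassCurve WeierstrassCurve.Affine

lemma globalFun_mem_poleSpace {F : Type*} [Field F] {W : WeierstrassCurve.Affine F} {n t : ℕ}
    {U : Submodule F W.CoordinateRing} (hU : U ≤ poleSpace W n) (ψ : U) {G : W.CoordinateRing}
    (hG : G ∈ poleSpace W n) (x : (Fin t → U) × F) :
    globalFun t ψ G x ∈ poleSpace W (n * t) := by
  rw [globalFun_apply]
  refine add_mem (sum_mem fun k _ ↦ ?_) (Submodule.smul_mem _ _ (pow_mem_poleSpace hG t))
  have hdeg : n * t = n + (n * k + n * (t - 1 - k)) := by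
    rw [← mul_add, ← mul_one_add]
    congr 1
    omega
  rw [hdeg]
  exact mul_mem_poleSpace (hU (x.1 k).2)
    (mul_mem_poleSpace (pow_mem_poleSpace hG k) (pow_mem_poleSpace (hU ψ.2) _))

variable {F : Type*} [Field F] [DecidableEq F] {g : F} {H : AddSubgroup (curve g).Point}
  [Fintype H] {t m : ℕ} {β : Fin m → F} {pt : Fin (3 * Fintype.card H) × Fin m → (curve g).Point}
  {ψ G : (curve g).CoordinateRing}

namespace IsPointArray

lemma ne_zero {N : ℕ} {pt : Fin N × Fin m → (curve g).Point} (h : IsPointArray H pt β)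
    (p : Fin N × Fin m) : pt p ≠ 0 :=
  (ne_of_mem_of_not_mem H.zero_mem (h.notMem p)).symm

lemma isRepairSystem (h : IsPointArray H pt β) (hf : IsTraceFraction H ψ G)
    {U : Submodule F (curve g).CoordinateRing} (hU : U ≤ poleSpace (curve g) (3 * Fintype.card H))
    (hψ : ψ ∈ U) {δ : ℕ} (hblock : ∀ j, ∀ u ∈ U, u ≠ 0 →
      ({i | ev (pt (i, j)) u = 0} : Finset (Fin (3 * Fintype.card H))).card + δ ≤
        3 * Fintype.card H) :
    IsRepairSystem t δ ⟨ψ, hψ⟩ G (fun p ↦ ev (pt p)) β where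
  injective := h.injective_trace
  ne_zero p := hf.denom_ne_zero _ (h.notMem p)
  eq_mul p := by rw [hf.num_eq _ (h.notMem p), h.trace_eq]
  card_block_zeros_add_le j u hu := hblock j u u.2 (by simpa using hu)
  card_zeros_le x hx := by
    have hle := card_zeros_le (globalFun_mem_poleSpace hU ⟨ψ, hψ⟩ hf.num_mem x) hx
      (Z := ({p | ev (pt p) (globalFun t ⟨ψ, hψ⟩ G x) = 0} : Finset _).map ⟨pt, h.injective⟩)
      (by simp [h.ne_zero]) (Finset.forall_mem_map.mpr fun p hp ↦
        (mem_pointIdeal_iff (h.ne_zero p)).mpr (Finset.mem_filter.mp hp).2)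
    rwa [Finset.card_map] at hle

theorem existsOptimalLRC_poleSpace (h : IsPointArray H pt β) (hf : IsTraceFraction H ψ G)
    (ht : 1 ≤ t) (htm : t < m) :
    ExistsOptimalLRC F (3 * Fintype.card H * m) ((3 * Fintype.card H - 2) * t + 1)
      (3 * Fintype.card H * (m - t)) (3 * Fintype.card H - 2) 3 := by
  have hH : 0 < Fintype.card H := Fintype.card_pos
  have hψ : ψ ∈ poleSpace (curve g) (3 * Fintype.card H - 2) :=
    poleSpace_mono (by omega) hf.denom_mem
  have hsys : IsRepairSystem t 3 ⟨ψ, hψ⟩ G (fun p ↦ ev (pt p)) β := by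
    refine h.isRepairSystem hf (poleSpace_mono (by omega)) hψ fun j u hu hu0 ↦ ?_
    let block : Fin (3 * Fintype.card H) ↪ (curve g).Point :=
      ⟨fun i ↦ pt (i, j), fun _ _ hii' ↦ (Prod.mk.inj (h.injective hii')).1⟩
    have hcard := card_zeros_add_three_le block (fun i i' ↦ h.add_ne_zero i i' j)
      (h.sum_eq_zero j) (by rw [Fintype.card_fin]; omega) hu hu0
      (Z := {i | ev (pt (i, j)) u = 0}) fun i hi ↦
        (mem_pointIdeal_iff (h.ne_zero (i, j))).mpr (Finset.mem_filter.mp hi).2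
    rwa [Fintype.card_fin] at hcard
  have hrank : Module.finrank F (poleSpace (curve g) (3 * Fintype.card H - 2)) =
      3 * Fintype.card H - 2 := finrank_poleSpace (by omega)
  simpa only [hrank] using
    hsys.existsOptimalLRC ht htm (by norm_num) (by omega) (by omega)

lemma injective_xCoord {N : ℕ} {pt : Fin N × Fin m → (curve g).Point} (h : IsPointArray H pt β)
    (j : Fin m) : Function.Injective fun i ↦ xCoord (pt (i, j)) := fun i i' hx ↦ by
  rcases eq_or_eq_neg_of_xCoord_eq (h.ne_zero _) (h.ne_zero _) hx with hpt | hpt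
  · exact (Prod.mk.inj (h.injective hpt)).1
  · exact absurd (add_eq_zero_iff_eq_neg.mpr hpt) (h.add_ne_zero i i' j)

theorem existsOptimalLRC_span_pair (h : IsPointArray H pt β) (hf : IsTraceFraction H ψ G)
    (ht : 1 ≤ t) (htm : t < m) :
    ExistsOptimalLRC F (3 * Fintype.card H * m) (2 * t + 1) (3 * Fintype.card H * (m - t)) 2
      (3 * Fintype.card H - 1) := by
  have hH : 0 < Fintype.card H := Fintype.card_pos
  have : Nontrivial (Fin (3 * Fintype.card H)) := Fin.nontrivial_iff_two_le.mpr (by omega)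
  let x : (curve g).CoordinateRing := coordinateRingEquiv (curve g) (X, 0)
  have hψ (i j) : ev (pt (i, j)) ψ ≠ 0 := hf.denom_ne_zero _ (h.notMem _)
  have hx (j) : Function.Injective fun i ↦ ev (pt (i, j)) x := by
    simpa [x, ev_coordinateRingEquiv] using h.injective_xCoord j
  have hxmem : x ∈ poleSpace (curve g) 2 :=
    coordinateRingEquiv_mem_poleSpace_of_natDegree_le (by simp) (.inr rfl)
  have hU : Submodule.span F {ψ, x * ψ} ≤ poleSpace (curve g) (3 * Fintype.card H) := by
    rw [Submodule.span_le, Set.pair_subset_iff]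
    exact ⟨poleSpace_mono (by omega) hf.denom_mem,
      poleSpace_mono (by omega) (mul_mem_poleSpace hxmem hf.denom_mem)⟩
  have hsys : IsRepairSystem t (3 * Fintype.card H - 1)
      ⟨ψ, Submodule.subset_span (Set.mem_insert ψ {x * ψ})⟩ G (fun p ↦ ev (pt p)) β :=
    h.isRepairSystem hf hU _ fun j u hu hu0 ↦ by
      have hcard := card_le_one_of_mem_span_pair_mul (fun i ↦ hψ i j) (hx j) hu hu0
        (Z := {i | ev (pt (i, j)) u = 0}) (by simp)
      omega
  have hrank := finrank_span_pair_mul (fun i ↦ hψ i ⟨0, by omega⟩) (hx ⟨0, by omega⟩)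
  have : FiniteDimensional F (Submodule.span F {ψ, x * ψ}) :=
    FiniteDimensional.of_finrank_pos (by omega)
  simpa only [hrank] using hsys.existsOptimalLRC ht htm (by omega) (by omega) (by omega)

end IsPointArray

end PointArrayCodes

section Representatives

open WeierstrassCurve.Affine

variable {F : Type*} [Field F] [DecidableEq F] {g : F} [Fintype (curve g).Point]

lemma card_filter_add_self_eq_zero_le [CharP F 3] :
    ({P | P + P = 0} : Finset (curve g).Point).card ≤ 4 := by
  have hy {P : (curve g).Point} (hP : P ∈ ({P | P + P = 0} : Finset (curve g).Point))
      (hP0 : P ≠ 0) : yCoord P = 0 :=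
    (neg_eq_self_iff_yCoord hP0).mp (neg_eq_iff_add_eq_zero.mpr (Finset.mem_filter.mp hP).2)
  by_cases hT : ∃ T ∈ ({P | P + P = 0} : Finset (curve g).Point), T ≠ 0
  · obtain ⟨T, hT, hT0⟩ := hT
    refine (Finset.card_le_card (t := {0, T, shift T, shift (shift T)}) fun P hP ↦ ?_).trans
      Finset.card_le_four
    simp only [Finset.mem_insert, Finset.mem_singleton]
    exact or_iff_not_imp_left.mpr fun hP0 ↦
      eq_or_eq_shift_of_yCoord_eq_zero hP0 hT0 (hy hP hP0) (hy hT hT0)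
  · push Not at hT
    refine (Finset.card_le_one.mpr fun P hP Q hQ ↦ ?_).trans (by norm_num)
    rw [hT P hP, hT Q hQ]

variable {H : AddSubgroup (curve g).Point} [Fintype H] [DecidablePred (· ∈ H)]

lemma card_filter_add_self_mem_le [CharP F 3] :
    ({P | P + P ∈ H} : Finset (curve g).Point).card ≤ 4 * Fintype.card H := by
  rw [Fintype.card_subtype]
  refine Finset.card_le_mul_card_image_of_maps_to (f := fun P ↦ P + P)
    (fun P hP ↦ by simpa using hP) 4 fun b _ ↦ ?_
  rcases Finset.eq_empty_or_nonempty
    ({P ∈ ({P | P + P ∈ H} : Finset (curve g).Point) | P + P = b}) with h | ⟨Q, hQ⟩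
  · simp [h]
  refine (Finset.card_le_card_of_injOn (· - Q) (fun P hP ↦ ?_)
    (sub_left_injective.injOn)).trans card_filter_add_self_eq_zero_le
  have hPb := (Finset.mem_filter.mp hP).2
  have hQb := (Finset.mem_filter.mp hQ).2
  simp [sub_add_sub_comm, hPb, hQb]

lemma card_filter_subgroupTrace_eq_le {ψ G : (curve g).CoordinateRing}
    (hf : IsTraceFraction H ψ G) (b : F) :
    ({P | P ∉ H ∧ subgroupTrace H P = b} : Finset (curve g).Point).card ≤
      3 * Fintype.card H := by
  refine card_zeros_le (u := G - b • ψ) (sub_mem hf.num_mem (Submodule.smul_mem _ _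
    (poleSpace_mono (by omega) hf.denom_mem))) (sub_ne_zero.mpr (hf.num_ne_smul b))
    (by simp [H.zero_mem]) fun P hP ↦ ?_
  obtain ⟨hPH, htrace⟩ := (Finset.mem_filter.mp hP).2
  rw [mem_pointIdeal_iff (ne_of_mem_of_not_mem H.zero_mem hPH).symm, map_sub, map_smul,
    hf.num_eq P hPH, htrace, smul_eq_mul, sub_self]

omit [DecidablePred (· ∈ H)] in
theorem exists_injective_subgroupTrace [CharP F 3] {ψ G : (curve g).CoordinateRing}
    (hf : IsTraceFraction H ψ G) {m : ℕ}
    (hm : 3 * Fintype.card H * m + 4 * Fintype.card H ≤ Fintype.card (curve g).Point) :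
    ∃ P : Fin m → (curve g).Point, (∀ j, P j + P j ∉ H) ∧
      Function.Injective fun j ↦ subgroupTrace H (P j) := by
  classical
  let S : Finset (curve g).Point := {P | P + P ∉ H}
  have hmem {P : (curve g).Point} (hP : P ∈ S) : P + P ∉ H := (Finset.mem_filter.mp hP).2
  have himage : S.card ≤ 3 * Fintype.card H * (S.image (subgroupTrace H)).card :=
    Finset.card_le_mul_card_image _ _ fun b _ ↦ (Finset.card_le_card fun P hP ↦ by
      obtain ⟨hPS, hb⟩ := Finset.mem_filter.mp hP
      simpa [hb] using fun hPH ↦ hmem hPS (H.add_mem hPH hPH)).trans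
        (card_filter_subgroupTrace_eq_le hf b)
  have hcard : m ≤ (S.image (subgroupTrace H)).card := by
    have hsplit : ({P | P + P ∈ H} : Finset (curve g).Point).card + S.card =
        Fintype.card (curve g).Point :=
      Finset.card_filter_add_card_filter_not (s := Finset.univ) _
    have htors := card_filter_add_self_mem_le (H := H)
    refine Nat.le_of_mul_le_mul_left (himage.trans' ?_) (by positivity : 0 < 3 * Fintype.card H)
    omega
  obtain ⟨V, hV, hVcard⟩ := Finset.exists_subset_card_eq hcard
  have hlift (j : Fin m) :
      ∃ P ∈ S, subgroupTrace H P = ((V.equivFinOfCardEq hVcard).symm j : F) :=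
    Finset.mem_image.mp (hV (Subtype.prop _))
  choose P hPS hPtrace using hlift
  refine ⟨P, fun j ↦ hmem (hPS j), ?_⟩
  simp only [hPtrace]
  exact Subtype.val_injective.comp (Equiv.injective _)

end Representatives

section Arithmetic

lemma two_mul_ceil_sq_sub_eight_div_six_le {k : ℕ} (hk : ¬ 3 ∣ k) :
    3 * (2 * ⌈((k : ℚ) ^ 2 - 8) / 6⌉) + 4 ≤ (k : ℤ) ^ 2 := by
  have hmod : k ^ 2 % 6 = 1 ∨ k ^ 2 % 6 = 4 := by
    have : k % 6 = 1 ∨ k % 6 = 2 ∨ k % 6 = 4 ∨ k % 6 = 5 := by omega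
    rcases this with h | h | h | h <;> simp [Nat.pow_mod, h]
  have hceil : ⌈((k : ℚ) ^ 2 - 8) / 6⌉ ≤ ((k : ℤ) ^ 2 - 4) / 6 := by
    have hlt : (k : ℤ) ^ 2 - 8 ≤ 6 * (((k : ℤ) ^ 2 - 4) / 6) := by
      zify at hmod
      omega
    rw [Int.ceil_le, div_le_iff₀ (by norm_num), mul_comm]
    exact_mod_cast hlt
  omega

lemma three_mul_mul_add_le_sq {s h₀ h m : ℕ} (hs : 0 < s) (hh₀ : 0 < h₀) (hdvd : h₀ ∣ 3 ^ s + 1)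
    (hh : h = h₀ ^ 2)
    (hm : (m : ℤ) ≤
      2 * ⌈(((3 ^ (2 * s) : ℕ) : ℚ) + 2 * 3 ^ s + 1 - 8 * (h : ℚ)) / (6 * (h : ℚ))⌉) :
    3 * h * m + 4 * h ≤ (3 ^ s + 1) ^ 2 := by
  obtain ⟨k, hk⟩ := hdvd
  have hk3 : ¬ 3 ∣ k := fun hd ↦ by
    have h1 : 3 ∣ 3 ^ s + 1 := hk ▸ hd.mul_left h₀
    have h2 : 3 ∣ 3 ^ s := dvd_pow_self 3 hs.ne'
    omega
  have hfrac : (((3 ^ (2 * s) : ℕ) : ℚ) + 2 * 3 ^ s + 1 - 8 * (h : ℚ)) / (6 * (h : ℚ)) =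
      ((k : ℚ) ^ 2 - 8) / 6 := by
    have hkQ : (3 : ℚ) ^ s + 1 = h₀ * k := by exact_mod_cast hk
    have hsq : ((3 ^ (2 * s) : ℕ) : ℚ) + 2 * 3 ^ s + 1 = (h₀ * k) ^ 2 := by
      rw [← hkQ]
      push_cast
      ring
    rw [hsq, hh]
    push_cast
    field_simp
  rw [hfrac] at hm
  have hkm : 3 * m + 4 ≤ k ^ 2 := by
    zify
    linarith [two_mul_ceil_sq_sub_eight_div_six_le hk3]
  rw [hk, mul_pow, ← hh]
  linarith [Nat.mul_le_mul_left h hkm]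

end Arithmetic

end EllipticLRC

/-- For `q = 3^(2s)`, `h₀` a positive divisor of `3^s + 1`, and
`h = h₀²`, for all `1 ≤ t < m ≤ 2⌈(q + 2·3^s + 1 - 8h)/(6h)⌉`, there exist an
optimal `(3h-2, 3)`-LRC with parameters `[3hm, (3h-2)t + 1, 3h(m-t)]_q` and an
optimal `(2, 3h-1)`-LRC with parameters `[3hm, 2t + 1, 3h(m-t)]_q`. -/
theorem stmt_4 (s : ℕ) (hs : 0 < s) (q : ℕ) (hq : q = 3 ^ (2 * s))
    (h₀ : ℕ) (hh₀ : 0 < h₀) (hdvd : h₀ ∣ 3 ^ s + 1) (h : ℕ) (hh : h = h₀ ^ 2)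
    (t m : ℕ) (ht : 1 ≤ t) (htm : t < m)
    (hm : (m : ℤ) ≤ 2 * ⌈((q : ℚ) + 2 * 3 ^ s + 1 - 8 * (h : ℚ)) / (6 * (h : ℚ))⌉)
    (F : Type*) [Field F] [Fintype F] [DecidableEq F] (hF : Fintype.card F = q) :
    ExistsOptimalLRC F (3 * h * m) ((3 * h - 2) * t + 1) (3 * h * (m - t)) (3 * h - 2) 3 ∧
    ExistsOptimalLRC F (3 * h * m) (2 * t + 1) (3 * h * (m - t)) 2 (3 * h - 1) := by
  subst hq
  have : CharP F 3 := charP_of_card_eq_prime_pow hF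
  obtain ⟨g, hg, haffine⟩ := EllipticLRC.exists_card_curve_eq hF
  have hcard : Nat.card (EllipticLRC.curve g).Point = (3 ^ s + 1) ^ 2 := by
    rw [EllipticLRC.card_point hg, haffine]
    ring
  have := EllipticLRC.finite_point hg
  obtain ⟨H, hH, hHcard⟩ := EllipticLRC.exists_stable_card_eq_sq h₀
    (σ := EllipticLRC.shift (g := g)) (a := -1) (b := -1)
    (fun P ↦ by simpa only [neg_smul, one_smul, neg_add_rev] using
      eq_neg_of_add_eq_zero_right (EllipticLRC.add_shift_add_shift_shift hg P))
    (hcard ▸ pow_dvd_pow_of_dvd hdvd 2)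
  have := Fintype.ofFinite H
  have := Fintype.ofFinite (EllipticLRC.curve g).Point
  obtain rfl : Fintype.card H = h := by rw [hh, ← hHcard, Nat.card_eq_fintype_card]
  have hbound := EllipticLRC.three_mul_mul_add_le_sq hs hh₀ hdvd hh hm
  rw [← hcard, Nat.card_eq_fintype_card] at hbound
  obtain ⟨ψ, G, hf⟩ := EllipticLRC.exists_isTraceFraction hg hH
  obtain ⟨P, hP, hinj⟩ := EllipticLRC.exists_injective_subgroupTrace hf hbound
  obtain ⟨pt, hpt⟩ := EllipticLRC.exists_isPointArray hg hH hP hinj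
  exact ⟨hpt.existsOptimalLRC_poleSpace hf ht htm, hpt.existsOptimalLRC_span_pair hf ht htm⟩
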